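/- arXiv:2412.17318 — 16 statements merged into one kernel-verified Lean document; each statement's English description precedes it below -/
import Mathlib

section
/- Let V be a real reflexive Banach space, let V₁, …, V_N be closed subspaces of V, let F : V → ℝ be convex and Gâteaux differentiable with Gâteaux derivative F' : V → V*, and let 𝒩 be a closed subspace of V such that F(v + φ) = F(v) for all v ∈ V and φ ∈ 𝒩. Fix v ∈ V and suppose that for each j ∈ {1, …, N}, ŵ_j ∈ V_j minimizes w_j ↦ F(v + w_j) over V_j; set ŵ = Σ_{j=1}^N ŵ_j. Then for every w ∈ V, every φ ∈ 𝒩, and every choice of w_j ∈ V_j (j = 1, …, N) with Σ_{j=1}^N w_j = w + φ, one has ⟨F'(v), ŵ⟩ + Σ_{j=1}^N d_F(ŵ_j; v) ≤ ⟨F'(v), w⟩ + Σ_{j=1}^N d_F(w_j; v). In particular (taking w = ŵ), Σ_{j=1}^N d_F(ŵ_j; v) ≤ Σ_{j=1}^N d_F(w_j; v) for every φ ∈ 𝒩 and every decomposition Σ_{j=1}^N w_j = ŵ + φ with w_j ∈ V_j. -/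
/-- `f` is the Gâteaux derivative of `F` at `v`. -/
def HasGateauxDerivAt {V : Type*} [NormedAddCommGroup V] [NormedSpace ℝ V]
    (F : V → ℝ) (f : V →L[ℝ] ℝ) (v : V) : Prop :=
  ∀ w : V, Filter.Tendsto (fun t : ℝ => (F (v + t • w) - F v) / t)
    (nhdsWithin (0 : ℝ) {(0 : ℝ)}ᶜ) (nhds (f w))

/-- generalized additive Schwarz lemma for semicoercive problems. -/
theorem stmt_2 {V : Type*} [NormedAddCommGroup V] [NormedSpace ℝ V] [CompleteSpace V]
    (hrefl : Function.Surjective (NormedSpace.inclusionInDoubleDual ℝ V))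
    (N : ℕ) (Vj : Fin N → Submodule ℝ V) (hVjc : ∀ j, IsClosed ((Vj j : Set V)))
    (F : V → ℝ) (hconv : ConvexOn ℝ Set.univ F)
    (F' : V → V →L[ℝ] ℝ) (hF' : ∀ v : V, HasGateauxDerivAt F (F' v) v)
    (𝒩 : Submodule ℝ V) (h𝒩c : IsClosed ((𝒩 : Set V)))
    (hinv : ∀ v : V, ∀ φ ∈ 𝒩, F (v + φ) = F v)
    (v : V) (wh : Fin N → V) (hwhmem : ∀ j, wh j ∈ Vj j)
    (hwhmin : ∀ j, ∀ x ∈ Vj j, F (v + wh j) ≤ F (v + x)) :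
    (∀ (w φ : V), φ ∈ 𝒩 → ∀ wj : Fin N → V, (∀ j, wj j ∈ Vj j) →
      (∑ j, wj j) = w + φ →
      F' v (∑ j, wh j) + ∑ j, (F (v + wh j) - F v - F' v (wh j)) ≤
        F' v w + ∑ j, (F (v + wj j) - F v - F' v (wj j)))
    ∧
    (∀ φ : V, φ ∈ 𝒩 → ∀ wj : Fin N → V, (∀ j, wj j ∈ Vj j) →
      (∑ j, wj j) = (∑ j, wh j) + φ →
      ∑ j, (F (v + wh j) - F v - F' v (wh j)) ≤
        ∑ j, (F (v + wj j) - F v - F' v (wj j))) := by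
  have hφ0 : ∀ φ ∈ 𝒩, F' v φ = 0 := by
    intro φ hφ
    have h := hF' v φ
    have h0 : (fun t : ℝ => (F (v + t • φ) - F v) / t) = fun _ => 0 := by
      funext t
      rw [hinv v _ (𝒩.smul_mem t hφ)]
      simp
    rw [h0] at h
    exact tendsto_nhds_unique h tendsto_const_nhds
  have key : ∀ (w φ : V), φ ∈ 𝒩 → ∀ wj : Fin N → V, (∀ j, wj j ∈ Vj j) →
      (∑ j, wj j) = w + φ →
      F' v (∑ j, wh j) + ∑ j, (F (v + wh j) - F v - F' v (wh j)) ≤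
        F' v w + ∑ j, (F (v + wj j) - F v - F' v (wj j)) := by
    intro w φ hφ wj hwj hs
    have h1 : F' v w = ∑ j, F' v (wj j) := by
      rw [← map_sum, hs, map_add, hφ0 φ hφ, add_zero]
    rw [h1, map_sum, ← Finset.sum_add_distrib, ← Finset.sum_add_distrib]
    apply Finset.sum_le_sum
    intro j _
    linarith [hwhmin j (wj j) (hwj j)]
  refine ⟨key, ?_⟩
  intro φ hφ wj hwj hs
  linarith [key _ φ hφ wj hwj hs]
end

section
/- Let V be a real reflexive Banach space, let V₁, …, V_N be closed subspaces of V, let F : V → ℝ be convex and Gâteaux differentiable with Gâteaux derivative F' : V → V*, and let 𝒩 be a closed subspace of V such that F(v + φ) = F(v) for all v ∈ V and φ ∈ 𝒩. Let τ > 0 satisfy the strengthened convexity condition, and let (u^n), (w_j^{n+1}) be generated by the PSC iteration with exact local problems from an initial point u⁰ ∈ V. Then for every n ≥ 0, every w ∈ V, every φ ∈ 𝒩, and every choice of w_j ∈ V_j (j = 1, …, N) with Σ_{j=1}^N w_j = w + φ, one has F(u^{n+1}) ≤ F(u^n) + τ·(⟨F'(u^n), w⟩ + Σ_{j=1}^N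 d_F(w_j; u^n)). -/
/-- descent property of the parallel subspace correction (PSC) method for
semicoercive convex problems. -/
theorem stmt_3 {V : Type*} [NormedAddCommGroup V] [NormedSpace ℝ V] [CompleteSpace V]
    (hrefl : Function.Surjective (NormedSpace.inclusionInDoubleDual ℝ V))
    (N : ℕ) (Vj : Fin N → Submodule ℝ V) (hVjc : ∀ j, IsClosed ((Vj j : Set V)))
    (F : V → ℝ) (hconv : ConvexOn ℝ Set.univ F)
    (F' : V → V →L[ℝ] ℝ) (hF' : ∀ v : V, HasGateauxDerivAt F (F' v) v)
    (𝒩 : Submodule ℝ V) (h𝒩c : IsClosed ((𝒩 : Set V)))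
    (hinv : ∀ v : V, ∀ φ ∈ 𝒩, F (v + φ) = F v)
    (τ : ℝ) (hτ : 0 < τ)
    (hsc : ∀ (v : V) (z : Fin N → V), (∀ j, z j ∈ Vj j) →
      (1 - τ * (N : ℝ)) * F v + τ * ∑ j, F (v + z j) ≥ F (v + τ • ∑ j, z j))
    (u : ℕ → V) (w : ℕ → Fin N → V)
    (hwmem : ∀ n j, w n j ∈ Vj j)
    (hwmin : ∀ n j, ∀ x ∈ Vj j, F (u n + w n j) ≤ F (u n + x))
    (hupd : ∀ n : ℕ, u (n + 1) = u n + τ • ∑ j, w n j) :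
    ∀ n : ℕ, ∀ (z φ : V), φ ∈ 𝒩 → ∀ wj : Fin N → V, (∀ j, wj j ∈ Vj j) →
      (∑ j, wj j) = z + φ →
      F (u (n + 1)) ≤ F (u n) +
        τ * (F' (u n) z + ∑ j, (F (u n + wj j) - F (u n) - F' (u n) (wj j))) := by
  intro n z φ hφ wj hwj hsum
  have h0 : F' (u n) φ = 0 := by
    have h := hF' (u n) φ
    have h2 : (fun t : ℝ => (F (u n + t • φ) - F (u n)) / t) = fun _ => 0 := by
      funext t
      rw [hinv (u n) (t • φ) (𝒩.smul_mem t hφ)]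
      simp
    rw [h2] at h
    exact tendsto_nhds_unique h tendsto_const_nhds
  have h1 : ∑ j, F' (u n) (wj j) = F' (u n) z := by
    rw [← map_sum, hsum, map_add, h0, add_zero]
  have h2 := hsc (u n) (w n) (hwmem n)
  rw [← hupd n] at h2
  have h3 : ∑ j, F (u n + w n j) ≤ ∑ j, F (u n + wj j) :=
    Finset.sum_le_sum fun j _ => hwmin n j _ (hwj j)
  have h4 := mul_le_mul_of_nonneg_left h3 hτ.le
  rw [Finset.sum_sub_distrib, Finset.sum_sub_distrib, h1]
  simp only [Finset.sum_const, Finset.card_univ, Fintype.card_fin, nsmul_eq_mul]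
  linarith
end

section
/- Let V be a real reflexive Banach space, let V₁, …, V_N be closed subspaces of V, and let F : V → ℝ be convex and Gâteaux differentiable. Let τ > 0 satisfy the strengthened convexity condition, and let (u^n) be generated by the PSC iteration with exact local problems from an initial point u⁰ ∈ V. Then the energy sequence is decreasing: F(u^{n+1}) ≤ F(u^n) for all n ≥ 0. -/
/-- the energy sequence produced by the PSC method (exact local problems)
is decreasing. -/
theorem stmt_4 {V : Type*} [NormedAddCommGroup V] [NormedSpace ℝ V] [CompleteSpace V]
    (hrefl : Function.Surjective (NormedSpace.inclusionInDoubleDual ℝ V))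
    (N : ℕ) (Vj : Fin N → Submodule ℝ V) (hVjc : ∀ j, IsClosed ((Vj j : Set V)))
    (F : V → ℝ) (hconv : ConvexOn ℝ Set.univ F)
    (F' : V → V →L[ℝ] ℝ) (hF' : ∀ v : V, HasGateauxDerivAt F (F' v) v)
    (τ : ℝ) (hτ : 0 < τ)
    (hsc : ∀ (v : V) (z : Fin N → V), (∀ j, z j ∈ Vj j) →
      (1 - τ * (N : ℝ)) * F v + τ * ∑ j, F (v + z j) ≥ F (v + τ • ∑ j, z j))
    (u : ℕ → V) (w : ℕ → Fin N → V)
    (hwmem : ∀ n j, w n j ∈ Vj j)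
    (hwmin : ∀ n j, ∀ x ∈ Vj j, F (u n + w n j) ≤ F (u n + x))
    (hupd : ∀ n : ℕ, u (n + 1) = u n + τ • ∑ j, w n j) :
    ∀ n : ℕ, F (u (n + 1)) ≤ F (u n) := by
  intro n
  have h1 := hsc (u n) (w n) (hwmem n)
  have h2 : ∑ j, F (u n + w n j) ≤ ∑ _j : Fin N, F (u n) := by
    refine Finset.sum_le_sum fun j _ => ?_
    have h := hwmin n j 0 (Vj j).zero_mem
    rwa [add_zero] at h
  rw [Finset.sum_const, Finset.card_univ, Fintype.card_fin, nsmul_eq_mul] at h2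
  have h3 := mul_le_mul_of_nonneg_left h2 hτ.le
  rw [hupd n]
  linarith
end

section
/- Let V be a real Banach space, let V₁, …, V_N be closed subspaces with V = V₁ + ⋯ + V_N (every element of V is a finite sum of elements of the V_j), and let |·| be a continuous seminorm on V such that there exists C₀ > 0 with inf_{φ ∈ ker|·|} ‖v + φ‖ ≤ C₀|v| for all v ∈ V, and such that for each j there exists C_j > 0 with inf_{φ_j ∈ V_j ∩ ker|·|} ‖v_j + φ_j‖ ≤ C_j|v_j| for all v_j ∈ V_j. Then for every q ∈ [1, ∞) there exists a constant C > 0 such that for every w ∈ V and every δ > 0 there exist φ ∈ ker|·| and w_j ∈ V_j (j = 1, …, N) with Σ_{j=1}^N w_j = w + φ and (Σ_{j=1}^N ‖w_j‖^q)^{1/q} ≤ C|w| + δ. -/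
/-- seminorm stable decomposition (Lemma 4.6): under the global and local
quotient-norm bounds, every `w ∈ V` admits, up to kernel elements and arbitrary slack
`δ > 0`, a decomposition over the subspaces that is `q`-stable with respect to the
seminorm. -/
theorem stmt_5 {V : Type*} [NormedAddCommGroup V] [NormedSpace ℝ V] [CompleteSpace V]
    (N : ℕ) (Vj : Fin N → Submodule ℝ V) (hVjc : ∀ j, IsClosed ((Vj j : Set V)))
    (hdecomp : ∀ v : V, ∃ wj : Fin N → V, (∀ j, wj j ∈ Vj j) ∧ (∑ j, wj j) = v)
    (p : Seminorm ℝ V) (hpc : Continuous (p : V → ℝ))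
    (C₀ : ℝ) (hC₀ : 0 < C₀)
    (hglob : ∀ v : V, (⨅ φ : {x : V // p x = 0}, ‖v + (φ : V)‖) ≤ C₀ * p v)
    (Cj : Fin N → ℝ) (hCjpos : ∀ j, 0 < Cj j)
    (hloc : ∀ j : Fin N, ∀ vj ∈ Vj j,
      (⨅ φ : {x : V // x ∈ Vj j ∧ p x = 0}, ‖vj + (φ : V)‖) ≤ Cj j * p vj) :
    ∀ q : ℝ, 1 ≤ q → ∃ C : ℝ, 0 < C ∧
      ∀ (w : V) (δ : ℝ), 0 < δ →
        ∃ (φ : V) (wj : Fin N → V), p φ = 0 ∧ (∀ j, wj j ∈ Vj j) ∧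
          (∑ j, wj j) = w + φ ∧
          (∑ j, ‖wj j‖ ^ q) ^ (1 / q) ≤ C * p w + δ := by
  intro q hq
  haveI : ∀ j, CompleteSpace (Vj j) := fun j => (hVjc j).completeSpace_coe
  let f : ((j : Fin N) → Vj j) →L[ℝ] V :=
    ∑ j, (Vj j).subtypeL.comp (ContinuousLinearMap.proj j)
  have hf : ∀ x, f x = ∑ j, (x j : V) := by
    intro x
    simp [f, ContinuousLinearMap.sum_apply]
  have hsurj : Function.Surjective f := by
    intro v
    obtain ⟨wj, h1, h2⟩ := hdecomp v
    exact ⟨fun j => ⟨wj j, h1 j⟩, by rw [hf]; exact h2⟩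
  obtain ⟨C, Cpos, hC⟩ := f.exists_preimage_norm_le hsurj
  have hK : 0 < ((N : ℝ) + 1) * C := by positivity
  refine ⟨((N : ℝ) + 1) * C * C₀, by positivity, ?_⟩
  intro w δ hδ
  haveI : Nonempty {x : V // p x = 0} := ⟨⟨0, map_zero p⟩⟩
  have hlt : (⨅ φ : {x : V // p x = 0}, ‖w + (φ : V)‖) < C₀ * p w + δ / (((N : ℝ) + 1) * C) :=
    lt_of_le_of_lt (hglob w) (lt_add_of_pos_right _ (by positivity))
  obtain ⟨⟨φ, hφ⟩, hφ2⟩ := exists_lt_of_ciInf_lt hlt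
  obtain ⟨x, hx, hxn⟩ := hC (w + φ)
  refine ⟨φ, fun j => x j, hφ, fun j => (x j).2, by rw [← hf, hx], ?_⟩
  have hq0 : 0 < q := by linarith
  set M := C * ‖w + φ‖ with hM
  have hM0 : 0 ≤ M := by positivity
  have h1 : ∑ j, ‖(x j : V)‖ ^ q ≤ (((N : ℝ) + 1) * M) ^ q := by
    calc ∑ j, ‖(x j : V)‖ ^ q ≤ ∑ j : Fin N, M ^ q := by
          apply Finset.sum_le_sum
          intro j _
          exact Real.rpow_le_rpow (norm_nonneg _) ((norm_le_pi_norm x j).trans hxn) hq0.le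
      _ = N * M ^ q := by simp
      _ ≤ ((N : ℝ) + 1) ^ q * M ^ q := by
          have : (N : ℝ) + 1 ≤ ((N : ℝ) + 1) ^ q :=
            Real.self_le_rpow_of_one_le (by linarith [Nat.cast_nonneg (α := ℝ) N]) hq
          gcongr
          linarith
      _ = _ := (Real.mul_rpow (by positivity) hM0).symm
  calc (∑ j, ‖(x j : V)‖ ^ q) ^ (1 / q) ≤ ((((N : ℝ) + 1) * M) ^ q) ^ (1 / q) :=
        Real.rpow_le_rpow (Finset.sum_nonneg fun j _ => by positivity) h1 (by positivity)
    _ = ((N : ℝ) + 1) * M := by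
        rw [one_div, Real.rpow_rpow_inv (by positivity) hq0.ne']
    _ = (((N : ℝ) + 1) * C) * ‖w + φ‖ := by rw [hM]; ring
    _ ≤ (((N : ℝ) + 1) * C) * (C₀ * p w + δ / (((N : ℝ) + 1) * C)) :=
        mul_le_mul_of_nonneg_left hφ2.le hK.le
    _ = ((N : ℝ) + 1) * C * C₀ * p w + δ := by
        rw [mul_add, mul_div_cancel₀ _ hK.ne']; ring
end

section
/- Let V be a real reflexive Banach space, let V₁, …, V_N be closed subspaces of V, and let |·| be a continuous seminorm on V such that there exists C₀ > 0 with inf_{φ ∈ ker|·|} ‖v + φ‖ ≤ C₀|v| for all v ∈ V. Let F : V → ℝ be convex and Gâteaux differentiable with Gâteaux derivative F', with F(v + φ) = F(v) for all v ∈ V and φ ∈ ker|·|. Let q > 1 and suppose F is locally q-weakly smooth: for every ‖·‖-bounded convex subset K of V there exists L_K > 0 such that d_F(w; v) ≤ L_K ‖w‖^q whenever v ∈ K and v + w ∈ K. Then for every j ∈ {1, …, N}, every |·|-bounded convex subset K of V, and every ‖·‖-bounded convex subset K_j of V_j with 0 ∈ K_j, there exists M > 0 such that d_F(w_j; v) ≤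 M ‖w_j‖^q for all v ∈ K and w_j ∈ K_j. -/
/-- local `q`-weak smoothness of a semicoercive convex functional
transfers to local smoothness on seminorm-bounded sets (Proposition 4.8). -/
theorem stmt_6 {V : Type*} [NormedAddCommGroup V] [NormedSpace ℝ V] [CompleteSpace V]
    (hrefl : Function.Surjective (NormedSpace.inclusionInDoubleDual ℝ V))
    (N : ℕ) (Vj : Fin N → Submodule ℝ V) (hVjc : ∀ j, IsClosed ((Vj j : Set V)))
    (p : Seminorm ℝ V) (hpc : Continuous (p : V → ℝ))
    (C₀ : ℝ) (hC₀ : 0 < C₀)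
    (hglob : ∀ v : V, (⨅ φ : {x : V // p x = 0}, ‖v + (φ : V)‖) ≤ C₀ * p v)
    (F : V → ℝ) (hconv : ConvexOn ℝ Set.univ F)
    (F' : V → V →L[ℝ] ℝ) (hF' : ∀ v : V, HasGateauxDerivAt F (F' v) v)
    (hinv : ∀ v φ : V, p φ = 0 → F (v + φ) = F v)
    (q : ℝ) (hq : 1 < q)
    (hsmooth : ∀ K : Set V, Convex ℝ K → (∃ M : ℝ, ∀ v ∈ K, ‖v‖ ≤ M) →
      ∃ L : ℝ, 0 < L ∧ ∀ v w : V, v ∈ K → v + w ∈ K →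
        F (v + w) - F v - F' v w ≤ L * ‖w‖ ^ q) :
    ∀ j : Fin N, ∀ K : Set V, Convex ℝ K → (∃ M : ℝ, ∀ v ∈ K, p v ≤ M) →
      ∀ Kj : Set V, Kj ⊆ (Vj j : Set V) → Convex ℝ Kj →
        (∃ M : ℝ, ∀ v ∈ Kj, ‖v‖ ≤ M) → (0 : V) ∈ Kj →
        ∃ M : ℝ, 0 < M ∧ ∀ v ∈ K, ∀ wj ∈ Kj,
          F (v + wj) - F v - F' v wj ≤ M * ‖wj‖ ^ q := by
  intro j K _ hKb Kj _ _ hKjb h0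
  obtain ⟨M, hM⟩ := hKb
  obtain ⟨B, hB⟩ := hKjb
  have hB0 : 0 ≤ B := by simpa using hB 0 h0
  obtain ⟨L, hL, hLs⟩ := hsmooth (Metric.closedBall (0 : V) (C₀ * M + 1 + B))
    (convex_closedBall _ _) ⟨C₀ * M + 1 + B, fun v hv => by simpa using hv⟩
  refine ⟨L, hL, fun v hv w hw => ?_⟩
  haveI : Nonempty {x : V // p x = 0} := ⟨⟨0, map_zero p⟩⟩
  have hlt : (⨅ φ : {x : V // p x = 0}, ‖v + (φ : V)‖) < C₀ * p v + 1 := by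
    linarith [hglob v]
  obtain ⟨⟨φ, hφ⟩, hφ'⟩ := exists_lt_of_ciInf_lt hlt
  have h1 : ‖v + φ‖ ≤ C₀ * M + 1 := by
    have h2 : C₀ * p v ≤ C₀ * M := mul_le_mul_of_nonneg_left (hM v hv) hC₀.le
    have h3 : ‖v + φ‖ < C₀ * p v + 1 := hφ'
    linarith
  have hd : F' (v + φ) w = F' v w := by
    have ha := hF' (v + φ) w
    have hb := hF' v w
    refine tendsto_nhds_unique ha (hb.congr fun t => ?_)
    rw [hinv v φ hφ, add_right_comm, hinv _ φ hφ]
  have key := hLs (v + φ) w (by simpa using h1.trans (by linarith))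
    (by
      have := norm_add_le (v + φ) w
      have := hB w hw
      rw [mem_closedBall_zero_iff]
      linarith)
  rwa [hd, add_right_comm, hinv _ φ hφ, hinv v φ hφ] at key
end

section
/- Let V be a real reflexive Banach space, let V₁, …, V_N be closed subspaces with V = V₁ + ⋯ + V_N, and let |·| be a continuous seminorm on V such that there exists C₀ > 0 with inf_{φ ∈ ker|·|} ‖v + φ‖ ≤ C₀|v| for all v ∈ V, and for each j there exists C_j > 0 with inf_{φ_j ∈ V_j ∩ ker|·|} ‖v_j + φ_j‖ ≤ C_j|v_j| for all v_j ∈ V_j. Let F : V → ℝ be convex and Gâteaux differentiable with Gâteaux derivative F', with F(v + φ) = F(v) for all v ∈ V and φ ∈ ker|·|. Let q > 1 and assume: for every j, every |·|-bounded convex subset K of V, and every r > 0, there exists L > 0 such that d_F(w_j; v) ≤ L‖w_j‖^q for all v ∈ K and all w_j ∈ V_j with ‖w_j‖ ≤ r. Then for every |·|-bounded convex subset K of V there exists a constant C_K > 0 such that for all v ∈ K and w ∈ V with v + w ∈ K, there exist φ ∈ ker|·| and w_j ∈ V_j (j = 1, …, N) with Σ_{j=1}^N w_j = w + φ and Σ_{j=1}^N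 d_F(w_j; v) ≤ (C_K/q)·|w|^q. -/
/-- stable decomposition lemma (Lemma 4.10): on every seminorm-bounded
convex set there is a constant `C_K` such that the sum of local Bregman distances of a
suitable decomposition is bounded by `(C_K / q)·|w|^q`. -/
theorem stmt_7 {V : Type*} [NormedAddCommGroup V] [NormedSpace ℝ V] [CompleteSpace V]
    (hrefl : Function.Surjective (NormedSpace.inclusionInDoubleDual ℝ V))
    (N : ℕ) (Vj : Fin N → Submodule ℝ V) (hVjc : ∀ j, IsClosed ((Vj j : Set V)))
    (hdecomp : ∀ v : V, ∃ wj : Fin N → V, (∀ j, wj j ∈ Vj j) ∧ (∑ j, wj j) = v)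
    (p : Seminorm ℝ V) (hpc : Continuous (p : V → ℝ))
    (C₀ : ℝ) (hC₀ : 0 < C₀)
    (hglob : ∀ v : V, (⨅ φ : {x : V // p x = 0}, ‖v + (φ : V)‖) ≤ C₀ * p v)
    (Cj : Fin N → ℝ) (hCjpos : ∀ j, 0 < Cj j)
    (hloc : ∀ j : Fin N, ∀ vj ∈ Vj j,
      (⨅ φ : {x : V // x ∈ Vj j ∧ p x = 0}, ‖vj + (φ : V)‖) ≤ Cj j * p vj)
    (F : V → ℝ) (hconv : ConvexOn ℝ Set.univ F)
    (F' : V → V →L[ℝ] ℝ) (hF' : ∀ v : V, HasGateauxDerivAt F (F' v) v)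
    (hinv : ∀ v φ : V, p φ = 0 → F (v + φ) = F v)
    (q : ℝ) (hq : 1 < q)
    (hsmooth : ∀ j : Fin N, ∀ K : Set V, Convex ℝ K → (∃ M : ℝ, ∀ v ∈ K, p v ≤ M) →
      ∀ r : ℝ, 0 < r → ∃ L : ℝ, 0 < L ∧
        ∀ v ∈ K, ∀ wj ∈ Vj j, ‖wj‖ ≤ r →
          F (v + wj) - F v - F' v wj ≤ L * ‖wj‖ ^ q) :
    ∀ K : Set V, Convex ℝ K → (∃ M : ℝ, ∀ v ∈ K, p v ≤ M) →
      ∃ CK : ℝ, 0 < CK ∧ ∀ v w : V, v ∈ K → v + w ∈ K →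
        ∃ (φ : V) (wj : Fin N → V), p φ = 0 ∧ (∀ j, wj j ∈ Vj j) ∧
          (∑ j, wj j) = w + φ ∧
          (∑ j, (F (v + wj j) - F v - F' v (wj j))) ≤ (CK / q) * (p w) ^ q := by
  intro K hK hKb
  obtain ⟨M, hM⟩ := hKb
  -- a bounded decomposition from the open mapping theorem
  have hdec : ∃ A : ℝ, 0 < A ∧ ∀ x : V, ∃ wj : Fin N → V, (∀ j, wj j ∈ Vj j) ∧
      (∑ j, wj j) = x ∧ ∀ j, ‖wj j‖ ≤ A * ‖x‖ := by
    haveI : ∀ j, CompleteSpace (Vj j) := fun j => (hVjc j).completeSpace_coe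
    let T : (∀ j, Vj j) →L[ℝ] V :=
      ∑ j, (Vj j).subtypeL.comp (ContinuousLinearMap.proj (R := ℝ) (φ := fun j => Vj j) j)
    have hT : ∀ x, T x = ∑ j, (x j : V) := by
      intro x
      simp [T]
    have hsurj : Function.Surjective T := by
      intro x
      obtain ⟨wj, h1, h2⟩ := hdecomp x
      exact ⟨fun j => ⟨wj j, h1 j⟩, by rw [hT]; exact h2⟩
    obtain ⟨A, hA, h⟩ := T.exists_preimage_norm_le hsurj
    refine ⟨A, hA, fun x => ?_⟩
    obtain ⟨y, hy, hn⟩ := h x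
    exact ⟨fun j => y j, fun j => (y j).2, by rw [← hT]; exact hy,
      fun j => (norm_le_pi_norm y j).trans hn⟩
  obtain ⟨A, hA, hdec⟩ := hdec
  have hB : 0 < A * (2 * C₀) := by positivity
  have hr : 0 < A * (2 * C₀) * (2 * (|M| + 1)) := by positivity
  choose L hL hLs using fun j => hsmooth j K hK ⟨M, hM⟩ _ hr
  have hS : 0 ≤ ∑ j, L j := Finset.sum_nonneg fun j _ => (hL j).le
  have hq0 : 0 < q := by linarith
  have hBq : 0 < (A * (2 * C₀)) ^ q := Real.rpow_pos_of_pos hB q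
  refine ⟨q * ((∑ j, L j) * (A * (2 * C₀)) ^ q + 1), by positivity, ?_⟩
  intro v w hv hvw
  rw [mul_div_cancel_left₀ _ hq0.ne']
  have hpw0 : 0 ≤ p w := apply_nonneg p w
  rcases hpw0.eq_or_lt with h0 | hpos
  · refine ⟨-w, fun _ => 0, ?_, fun j => (Vj j).zero_mem, by simp, ?_⟩
    · rw [map_neg_eq_map, ← h0]
    · simp only [add_zero, sub_self, map_zero, Finset.sum_const_zero]
      positivity
  · haveI : Nonempty {x : V // p x = 0} := ⟨⟨0, map_zero p⟩⟩
    have hlt : (⨅ φ : {x : V // p x = 0}, ‖w + (φ : V)‖) < 2 * C₀ * p w := by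
      have := hglob w
      nlinarith [mul_pos hC₀ hpos]
    obtain ⟨⟨φ, hφ⟩, hφn⟩ := exists_lt_of_ciInf_lt hlt
    obtain ⟨wj, h1, h2, h3⟩ := hdec (w + φ)
    refine ⟨φ, wj, hφ, h1, h2, ?_⟩
    have hwn : ∀ j, ‖wj j‖ ≤ A * (2 * C₀) * p w := fun j =>
      (h3 j).trans (by rw [mul_assoc]; exact mul_le_mul_of_nonneg_left hφn.le hA.le)
    have hpw : p w ≤ 2 * (|M| + 1) := by
      have e : p w ≤ p (v + w) + p v := by
        have := map_sub_le_add p (v + w) v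
        simpa using this
      have := hM v hv
      have := hM _ hvw
      have := le_abs_self M
      linarith
    calc ∑ j, (F (v + wj j) - F v - F' v (wj j))
        ≤ ∑ j, L j * ((A * (2 * C₀)) ^ q * p w ^ q) := by
          refine Finset.sum_le_sum fun j _ => ?_
          refine (hLs j v hv (wj j) (h1 j)
            ((hwn j).trans (mul_le_mul_of_nonneg_left hpw hB.le))).trans ?_
          rw [← Real.mul_rpow hB.le hpw0]
          exact mul_le_mul_of_nonneg_left
            (Real.rpow_le_rpow (norm_nonneg _) (hwn j) hq0.le) (hL j).le
      _ = (∑ j, L j) * (A * (2 * C₀)) ^ q * p w ^ q := by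
          rw [← Finset.sum_mul]; ring
      _ ≤ _ := by
          have : 0 ≤ p w ^ q := Real.rpow_nonneg hpw0 q
          nlinarith
end

section
/- Let V be a real reflexive Banach space, V₁, …, V_N closed subspaces of V, |·| a continuous seminorm on V, and F : V → ℝ convex and Gâteaux differentiable with Gâteaux derivative F', with F(v + φ) = F(v) for all v ∈ V and φ ∈ ker|·|. Let u ∈ V minimize F over V, let τ > 0 satisfy the strengthened convexity condition, and let (u^n) be generated by the PSC iteration with exact local problems from u⁰ ∈ V with F(u⁰) > F(u). Let q > 1 and suppose there exist constants C > 0 and R₀ ≥ 0 such that: (i) |v − u| ≤ R₀ for every v ∈ V with F(v) ≤ F(u⁰); (ii) for all v, w ∈ V with F(v) ≤ F(u⁰) and F(v + w) ≤ F(u⁰), there exist φ ∈ ker|·| and w_j ∈ V_j with Σ_{j=1}^N w_j = w + φ and Σ_{j=1}^N d_F(w_j; v) ≤ (C/q)|w|^q. Set ζ_n = F(u^n) − F(u). Then: if ζ₀ > C·R₀^q, then ζ₁ ≤ (1 − τ(1 − 1/q))·ζ₀; and if ζ₀ ≤ C·R₀^q, then for all n ≥ 0, ζ_n ≤ C'/(n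 + (C'/ζ₀)^{1/β})^β, where β = q − 1 and C' = (q/τ)^{q−1}·C·R₀^q. -/
lemma aux_gateaux_le {V : Type*} [NormedAddCommGroup V] [NormedSpace ℝ V]
    (F : V → ℝ) (hconv : ConvexOn ℝ Set.univ F) (f : V →L[ℝ] ℝ) (v : V)
    (hf : HasGateauxDerivAt F f v) (d : V) : f d ≤ F (v + d) - F v := by
  have h1 := (hf d).mono_left (nhdsWithin_mono (0 : ℝ)
    (show Set.Ioi (0 : ℝ) ⊆ {(0 : ℝ)}ᶜ from fun x hx => ne_of_gt hx))
  refine le_of_tendsto h1 ?_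
  filter_upwards [Ioo_mem_nhdsGT (show (0 : ℝ) < 1 by norm_num)] with t ht
  rw [div_le_iff₀ ht.1]
  have h := hconv.2 (Set.mem_univ v) (Set.mem_univ (v + d))
    (show 0 ≤ 1 - t by linarith [ht.2]) ht.1.le (by ring)
  have e : (1 - t) • v + t • (v + d) = v + t • d := by module
  rw [e] at h
  simp only [smul_eq_mul] at h
  linarith

lemma aux_gateaux_zero {V : Type*} [NormedAddCommGroup V] [NormedSpace ℝ V]
    (F : V → ℝ) (f : V →L[ℝ] ℝ) (v : V)
    (hf : HasGateauxDerivAt F f v) (d : V) (hd : ∀ t : ℝ, F (v + t • d) = F v) : f d = 0 := by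
  have h1 := hf d
  simp only [hd, sub_self, zero_div] at h1
  exact tendsto_nhds_unique h1 tendsto_const_nhds

/-- The scalar recursion step. -/
lemma aux_scalar (q τ K C' β D a b : ℝ) (hq : 1 < q) (hτ : 0 < τ) (hK : 0 < K)
    (hβ : β = q - 1) (hC' : C' = (q / τ) ^ (q - 1) * K) (hD : 0 < D)
    (ha : 0 ≤ a) (haK : a ≤ K) (haD : a ≤ C' / D ^ β)
    (hrec : ∀ t : ℝ, 0 ≤ t → t ≤ 1 → b ≤ a + τ * (K / q * t ^ q - t * a)) :
    b ≤ C' / (D + 1) ^ β := by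
  have hβ0 : 0 < β := by linarith
  have hq0 : 0 < q := by linarith
  have hqτ : 0 < q / τ := div_pos hq0 hτ
  have hC'0 : 0 < C' := by rw [hC']; positivity
  set t : ℝ := (a / K) ^ (1 / β) with ht
  have haK0 : 0 ≤ a / K := by positivity
  have ht0 : 0 ≤ t := by positivity
  have ht1 : t ≤ 1 := Real.rpow_le_one haK0 ((div_le_one hK).2 haK) (by positivity)
  have htβ : t ^ β = a / K := by
    rw [ht, ← Real.rpow_mul haK0, one_div_mul_cancel hβ0.ne', Real.rpow_one]
  have htq : t ^ q = t * (a / K) := by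
    have : q = 1 + β := by linarith
    rw [this, Real.rpow_add_of_nonneg ht0 zero_le_one hβ0.le, Real.rpow_one, htβ]
  set x : ℝ := τ / q * t with hx
  have hx0 : 0 ≤ x := by positivity
  have hax : a = C' * x ^ β := by
    rw [hx, Real.mul_rpow (by positivity) ht0, htβ, hC', ← hβ,
      Real.div_rpow hq0.le hτ.le, Real.div_rpow hτ.le hq0.le]
    have h1 : 0 < q ^ β := by positivity
    have h2 : 0 < τ ^ β := by positivity
    field_simp
  have hb : b ≤ a * (1 - β * x) := by
    have h := hrec t ht0 ht1
    rw [htq] at h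
    have e : a + τ * (K / q * (t * (a / K)) - t * a) = a * (1 - β * x) := by
      rw [hx, hβ]; field_simp; ring
    linarith
  have hxD : x * D ≤ 1 := by
    rw [hax, div_eq_mul_inv C' (D ^ β)] at haD
    have h := le_of_mul_le_mul_left haD hC'0
    rw [← Real.inv_rpow hD.le, Real.rpow_le_rpow_iff hx0 (by positivity) hβ0] at h
    calc x * D ≤ D⁻¹ * D := by gcongr
      _ = 1 := inv_mul_cancel₀ hD.ne'
  have hbern : 1 - β * x ≤ (1 + x) ^ (-β) := by
    rw [Real.rpow_def_of_pos (by linarith)]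
    have h1 := Real.add_one_le_exp (Real.log (1 + x) * -β)
    have h2 := Real.log_le_sub_one_of_pos (show 0 < 1 + x by linarith)
    nlinarith
  calc b ≤ a * (1 - β * x) := hb
    _ ≤ a * (1 + x) ^ (-β) := by gcongr
    _ = C' * (x / (1 + x)) ^ β := by
      rw [hax, Real.rpow_neg (by linarith), Real.div_rpow hx0 (by linarith)]; ring
    _ ≤ C' * (1 / (D + 1)) ^ β := by
      have : x / (1 + x) ≤ 1 / (D + 1) := by
        rw [div_le_div_iff₀ (by linarith) (by linarith)]; linarith
      gcongr
    _ = C' / (D + 1) ^ β := by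
      rw [Real.div_rpow zero_le_one (by linarith), Real.one_rpow]; ring

/-- sublinear convergence of the PSC method for semicoercive convex
problems (Theorem 4.12). -/
theorem stmt_8 {V : Type*} [NormedAddCommGroup V] [NormedSpace ℝ V] [CompleteSpace V]
    (hrefl : Function.Surjective (NormedSpace.inclusionInDoubleDual ℝ V))
    (N : ℕ) (Vj : Fin N → Submodule ℝ V) (hVjc : ∀ j, IsClosed ((Vj j : Set V)))
    (p : Seminorm ℝ V) (hpc : Continuous (p : V → ℝ))
    (F : V → ℝ) (hconv : ConvexOn ℝ Set.univ F)
    (F' : V → V →L[ℝ] ℝ) (hF' : ∀ v : V, HasGateauxDerivAt F (F' v) v)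
    (hinv : ∀ v φ : V, p φ = 0 → F (v + φ) = F v)
    (ustar : V) (hmin : ∀ v : V, F ustar ≤ F v)
    (τ : ℝ) (hτ : 0 < τ)
    (hsc : ∀ (v : V) (z : Fin N → V), (∀ j, z j ∈ Vj j) →
      (1 - τ * (N : ℝ)) * F v + τ * ∑ j, F (v + z j) ≥ F (v + τ • ∑ j, z j))
    (u : ℕ → V) (w : ℕ → Fin N → V)
    (hwmem : ∀ n j, w n j ∈ Vj j)
    (hwmin : ∀ n j, ∀ x ∈ Vj j, F (u n + w n j) ≤ F (u n + x))
    (hupd : ∀ n : ℕ, u (n + 1) = u n + τ • ∑ j, w n j)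
    (hinit : F ustar < F (u 0))
    (q : ℝ) (hq : 1 < q)
    (C R₀ : ℝ) (hC : 0 < C) (hR₀ : 0 ≤ R₀)
    (hlevel : ∀ v : V, F v ≤ F (u 0) → p (v - ustar) ≤ R₀)
    (hstable : ∀ v z : V, F v ≤ F (u 0) → F (v + z) ≤ F (u 0) →
      ∃ (φ : V) (wj : Fin N → V), p φ = 0 ∧ (∀ j, wj j ∈ Vj j) ∧
        (∑ j, wj j) = z + φ ∧
        (∑ j, (F (v + wj j) - F v - F' v (wj j))) ≤ (C / q) * (p z) ^ q)
    (β C' : ℝ) (hβ : β = q - 1) (hC' : C' = (q / τ) ^ (q - 1) * C * R₀ ^ q) :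
    (C * R₀ ^ q < F (u 0) - F ustar →
      F (u 1) - F ustar ≤ (1 - τ * (1 - 1 / q)) * (F (u 0) - F ustar))
    ∧
    (F (u 0) - F ustar ≤ C * R₀ ^ q →
      ∀ n : ℕ, F (u n) - F ustar ≤
        C' / ((n : ℝ) + (C' / (F (u 0) - F ustar)) ^ (1 / β)) ^ β) := by
  have hq0 : 0 < q := by linarith
  have hβ0 : 0 < β := by linarith
  -- key estimate
  have key : ∀ n, F (u n) ≤ F (u 0) → ∀ t : ℝ, 0 ≤ t → t ≤ 1 →
      F (u (n + 1)) - F ustar ≤ (F (u n) - F ustar) +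
        τ * (C * R₀ ^ q / q * t ^ q - t * (F (u n) - F ustar)) := by
    intro n hn t ht0 ht1
    have hz : F (u n + t • (ustar - u n)) ≤ F (u 0) := by
      have h := hconv.2 (Set.mem_univ (u n)) (Set.mem_univ ustar)
        (show 0 ≤ 1 - t by linarith) ht0 (by ring)
      have e : (1 - t) • u n + t • ustar = u n + t • (ustar - u n) := by module
      rw [e] at h
      simp only [smul_eq_mul] at h
      nlinarith [hmin (u n)]
    obtain ⟨φ, wj, hφ, hwj, hsum, hd⟩ := hstable (u n) (t • (ustar - u n)) hn hz
    have h1 := hsc (u n) (w n) (hwmem n)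
    rw [← hupd n] at h1
    have h2 : ∑ j, F (u n + w n j) ≤ ∑ j, F (u n + wj j) :=
      Finset.sum_le_sum fun j _ => hwmin n j _ (hwj j)
    have hφ0 : F' (u n) φ = 0 := by
      refine aux_gateaux_zero F _ _ (hF' _) φ fun s => hinv _ _ ?_
      rw [map_smul_eq_mul, hφ, mul_zero]
    have hgrad := aux_gateaux_le F hconv _ _ (hF' (u n)) (ustar - u n)
    rw [add_sub_cancel] at hgrad
    have h3 : ∑ j, F' (u n) (wj j) = t * F' (u n) (ustar - u n) := by
      rw [← map_sum, hsum, map_add, hφ0, add_zero, map_smul, smul_eq_mul]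
    have hp : p (t • (ustar - u n)) ≤ t * R₀ := by
      rw [map_smul_eq_mul, Real.norm_of_nonneg ht0, map_sub_rev]
      exact mul_le_mul_of_nonneg_left (hlevel _ hn) ht0
    have hpq : p (t • (ustar - u n)) ^ q ≤ t ^ q * R₀ ^ q := by
      rw [← Real.mul_rpow ht0 hR₀]
      exact Real.rpow_le_rpow (apply_nonneg p _) hp hq0.le
    have h4 : C / q * p (t • (ustar - u n)) ^ q ≤ C / q * (t ^ q * R₀ ^ q) :=
      mul_le_mul_of_nonneg_left hpq (by positivity)
    simp only [Finset.sum_sub_distrib, Finset.sum_const, Finset.card_univ, Fintype.card_fin,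
      nsmul_eq_mul] at hd
    rw [h3] at hd
    have h5 : t * F' (u n) (ustar - u n) ≤ t * (F ustar - F (u n)) :=
      mul_le_mul_of_nonneg_left hgrad ht0
    have e : C * R₀ ^ q / q * t ^ q = C / q * (t ^ q * R₀ ^ q) := by ring
    have h6 : ∑ j, F (u n + w n j) - N * F (u n) ≤
        C * R₀ ^ q / q * t ^ q - t * (F (u n) - F ustar) := by
      rw [e]; linarith
    have h7 := mul_le_mul_of_nonneg_left h6 hτ.le
    linarith
  have hmono : ∀ n, F (u n) ≤ F (u 0) := by
    intro n
    induction n with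
    | zero => exact le_rfl
    | succ k ih =>
      have h := key k ih 0 le_rfl zero_le_one
      rw [Real.zero_rpow hq0.ne'] at h
      linarith
  have hζ0 : 0 < F (u 0) - F ustar := by linarith
  constructor
  · intro hK
    have h := key 0 le_rfl 1 zero_le_one le_rfl
    rw [Real.one_rpow, zero_add] at h
    have h8 : C * R₀ ^ q / q ≤ (F (u 0) - F ustar) / q := by gcongr
    have h9 := mul_le_mul_of_nonneg_left h8 hτ.le
    have e : (1 - τ * (1 - 1 / q)) * (F (u 0) - F ustar) = (F (u 0) - F ustar) +
      τ * ((F (u 0) - F ustar) / q) - τ * (F (u 0) - F ustar) := by ring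
    rw [e]
    linarith
  · intro hK
    have hKpos : 0 < C * R₀ ^ q := by linarith
    have hC'2 : C' = (q / τ) ^ (q - 1) * (C * R₀ ^ q) := by rw [hC']; ring
    have hC'0 : 0 < C' := by
      have : 0 < q / τ := by positivity
      rw [hC'2]; positivity
    have hD0 : 0 < (C' / (F (u 0) - F ustar)) ^ (1 / β) := by positivity
    intro n
    induction n with
    | zero =>
      rw [Nat.cast_zero, zero_add, ← Real.rpow_mul (by positivity), one_div_mul_cancel hβ0.ne',
        Real.rpow_one, div_div_cancel₀ hC'0.ne']
    | succ k ih =>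
      have hk : (0 : ℝ) ≤ k := Nat.cast_nonneg k
      have h := aux_scalar q τ (C * R₀ ^ q) C' β _ _ (F (u (k + 1)) - F ustar) hq hτ hKpos hβ hC'2
        (by linarith) (by linarith [hmin (u k)]) (by linarith [hmono k]) ih (key k (hmono k))
      rw [Nat.cast_add, Nat.cast_one, add_right_comm]
      exact h
end

section
/- Let V be a real reflexive Banach space, V₁, …, V_N closed subspaces of V, |·| a continuous seminorm on V, and F : V → ℝ convex and Gâteaux differentiable with Gâteaux derivative F', with F(v + φ) = F(v) for all v ∈ V and φ ∈ ker|·|. Let u ∈ V minimize F over V, let τ > 0 satisfy the strengthened convexity condition, and let (u^n) be generated by the PSC iteration with exact local problems from u⁰ ∈ V. Let q > 1 and suppose there exist constants C > 0 and μ > 0 such that: (i) for all v, w ∈ V with F(v) ≤ F(u⁰) and F(v + w) ≤ F(u⁰), there exist φ ∈ ker|·| and w_j ∈ V_j with Σ_{j=1}^N w_j = w + φ and Σ_{j=1}^N d_F(w_j; v) ≤ (C/q)|w|^q; (ii) F(v) − F(u) ≥ (μ/q)|v − u|^q for every v ∈ V with F(v) ≤ F(u⁰). Set ζ_n = F(u^n)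 − F(u). Then for all n ≥ 0, ζ_n ≤ (1 − τ(1 − 1/q)·min{1, μ/(qC)}^{1/(q−1)})^n · ζ₀. -/
/-- linear convergence of the PSC method under a sharpness condition with
matching exponents `p = q` (Theorem 4.14(a)). -/
theorem stmt_9 {V : Type*} [NormedAddCommGroup V] [NormedSpace ℝ V] [CompleteSpace V]
    (hrefl : Function.Surjective (NormedSpace.inclusionInDoubleDual ℝ V))
    (N : ℕ) (Vj : Fin N → Submodule ℝ V) (hVjc : ∀ j, IsClosed ((Vj j : Set V)))
    (p : Seminorm ℝ V) (hpc : Continuous (p : V → ℝ))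
    (F : V → ℝ) (hconv : ConvexOn ℝ Set.univ F)
    (F' : V → V →L[ℝ] ℝ) (hF' : ∀ v : V, HasGateauxDerivAt F (F' v) v)
    (hinv : ∀ v φ : V, p φ = 0 → F (v + φ) = F v)
    (ustar : V) (hmin : ∀ v : V, F ustar ≤ F v)
    (τ : ℝ) (hτ : 0 < τ)
    (hsc : ∀ (v : V) (z : Fin N → V), (∀ j, z j ∈ Vj j) →
      (1 - τ * (N : ℝ)) * F v + τ * ∑ j, F (v + z j) ≥ F (v + τ • ∑ j, z j))
    (u : ℕ → V) (w : ℕ → Fin N → V)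
    (hwmem : ∀ n j, w n j ∈ Vj j)
    (hwmin : ∀ n j, ∀ x ∈ Vj j, F (u n + w n j) ≤ F (u n + x))
    (hupd : ∀ n : ℕ, u (n + 1) = u n + τ • ∑ j, w n j)
    (q : ℝ) (hq : 1 < q)
    (C μ : ℝ) (hC : 0 < C) (hμ : 0 < μ)
    (hstable : ∀ v z : V, F v ≤ F (u 0) → F (v + z) ≤ F (u 0) →
      ∃ (φ : V) (wj : Fin N → V), p φ = 0 ∧ (∀ j, wj j ∈ Vj j) ∧
        (∑ j, wj j) = z + φ ∧
        (∑ j, (F (v + wj j) - F v - F' v (wj j))) ≤ (C / q) * (p z) ^ q)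
    (hsharp : ∀ v : V, F v ≤ F (u 0) → (μ / q) * (p (v - ustar)) ^ q ≤ F v - F ustar) :
    ∀ n : ℕ, F (u n) - F ustar ≤
      (1 - τ * (1 - 1 / q) * (min 1 (μ / (q * C))) ^ (1 / (q - 1))) ^ n *
        (F (u 0) - F ustar) := by
  have hcv : ∀ (v d : V) (t : ℝ), 0 ≤ t → t ≤ 1 → F (v + t • d) ≤ F v + t * (F (v + d) - F v) := by
    intro v d t h0 h1
    have h := hconv.2 (Set.mem_univ v) (Set.mem_univ (v + d)) (sub_nonneg.2 h1) h0 (by ring)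
    have e : (1 - t) • v + t • (v + d) = v + t • d := by module
    rw [e] at h
    simp only [smul_eq_mul] at h
    linarith
  have hgrad : ∀ v d : V, F' v d ≤ F (v + d) - F v := by
    intro v d
    have h : Filter.Tendsto (fun t : ℝ => (F (v + t • d) - F v) / t)
        (nhdsWithin (0 : ℝ) (Set.Ioi 0)) (nhds (F' v d)) :=
      (hF' v d).mono_left (nhdsWithin_mono _ (fun x hx => ne_of_gt hx))
    refine le_of_tendsto h ?_
    filter_upwards [Ioo_mem_nhdsGT (zero_lt_one : (0 : ℝ) < 1)] with t ht
    rw [div_le_iff₀ ht.1]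
    have := hcv v d t ht.1.le ht.2.le
    linarith
  have hker : ∀ v φ : V, p φ = 0 → F' v φ = 0 := by
    intro v φ hφ
    have h1 := hgrad v φ
    have h2 := hgrad v (-φ)
    rw [hinv v φ hφ] at h1
    rw [hinv v (-φ) (by rw [map_neg_eq_map, hφ]), map_neg] at h2
    linarith
  have hsum : ∀ n (x : Fin N → V), (∀ j, x j ∈ Vj j) →
      F (u (n + 1)) ≤ F (u n) + τ * ∑ j, (F (u n + x j) - F (u n)) := by
    intro n x hx
    have h1 := hsc (u n) (w n) (hwmem n)
    rw [← hupd] at h1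
    have h2 : ∑ j, F (u n + w n j) ≤ ∑ j, F (u n + x j) :=
      Finset.sum_le_sum (fun j _ => hwmin n j _ (hx j))
    have h3 := mul_le_mul_of_nonneg_left h2 hτ.le
    rw [Finset.sum_sub_distrib]
    simp only [Finset.sum_const, Finset.card_univ, Fintype.card_fin, nsmul_eq_mul]
    linarith
  have hdec : ∀ n, F (u (n + 1)) ≤ F (u n) := by
    intro n
    have := hsum n (fun _ => 0) (fun j => (Vj j).zero_mem)
    simpa using this
  have hle : ∀ n, F (u n) ≤ F (u 0) := by
    intro n
    induction n with
    | zero => exact le_rfl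
    | succ k ih => exact (hdec k).trans ih
  have hq0 : 0 < q := by linarith
  have hm0 : 0 < min 1 (μ / (q * C)) := lt_min one_pos (by positivity)
  set m := min 1 (μ / (q * C)) with hm
  set t := m ^ (1 / (q - 1)) with ht
  have ht0 : 0 < t := Real.rpow_pos_of_pos hm0 _
  have ht1 : t ≤ 1 := Real.rpow_le_one hm0.le (min_le_left _ _)
    (div_nonneg zero_le_one (by linarith))
  have htm : t ^ (q - 1) = m := by
    rw [ht, ← Real.rpow_mul hm0.le, one_div_mul_cancel (by linarith), Real.rpow_one]
  have htq : t ^ q = m * t := by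
    rw [← htm]
    nth_rewrite 3 [← Real.rpow_one t]
    rw [← Real.rpow_add ht0]
    congr 1
    ring
  have hCm : C * m ≤ μ / q := by
    have h : m ≤ μ / (q * C) := min_le_right _ _
    rw [le_div_iff₀ (by positivity)] at h
    rw [le_div_iff₀ hq0]
    linarith
  have hstep : ∀ n, F (u (n + 1)) - F ustar ≤
      (1 - τ * (1 - 1 / q) * t) * (F (u n) - F ustar) := by
    intro n
    have hc := hcv (u n) (ustar - u n) t ht0.le ht1
    rw [add_sub_cancel] at hc
    have hmn := hmin (u n)
    have hz : F (u n + t • (ustar - u n)) ≤ F (u 0) := by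
      have := hle n
      nlinarith
    obtain ⟨φ, x, hφ, hx, hxs, hxd⟩ := hstable (u n) (t • (ustar - u n)) (hle n) hz
    have h1 := hsum n x hx
    have hlin : ∑ j, F' (u n) (x j) = t * F' (u n) (ustar - u n) := by
      rw [← map_sum, hxs, map_add, hker _ _ hφ, map_smul, smul_eq_mul, add_zero]
    rw [Finset.sum_sub_distrib, hlin] at hxd
    have hg := hgrad (u n) (ustar - u n)
    rw [add_sub_cancel] at hg
    have hg' := mul_le_mul_of_nonneg_left hg ht0.le
    have hs := hsharp (u n) (hle n)
    have hp : p (t • (ustar - u n)) ^ q = m * t * p (u n - ustar) ^ q := by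
      rw [map_smul_eq_mul, Real.norm_of_nonneg ht0.le, map_sub_rev p ustar (u n),
        Real.mul_rpow ht0.le (apply_nonneg p _), htq]
    rw [hp] at hxd
    have hP : 0 ≤ p (u n - ustar) ^ q := Real.rpow_nonneg (apply_nonneg p _) _
    generalize p (u n - ustar) ^ q = P at *
    have h2 : C / q * (m * t * P) ≤ t / q * (F (u n) - F ustar) := by
      calc C / q * (m * t * P) = t / q * ((C * m) * P) := by ring
        _ ≤ t / q * (μ / q * P) := by gcongr
        _ ≤ t / q * (F (u n) - F ustar) := by gcongr
    have h3 : ∑ j, (F (u n + x j) - F (u n)) ≤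
        t / q * (F (u n) - F ustar) + t * (F ustar - F (u n)) := by linarith
    have h4 := mul_le_mul_of_nonneg_left h3 hτ.le
    have e : (1 - τ * (1 - 1 / q) * t) * (F (u n) - F ustar) = (F (u n) - F ustar) +
        τ * (t / q * (F (u n) - F ustar) + t * (F ustar - F (u n))) := by ring
    rw [e]
    linarith
  generalize 1 - τ * (1 - 1 / q) * t = r at *
  intro n
  rcases le_or_gt 0 r with hr | hr
  · induction n with
    | zero => simp
    | succ k ih =>
      calc _ ≤ _ := hstep k
        _ ≤ r * (r ^ k * (F (u 0) - F ustar)) := by gcongr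
        _ = _ := by ring
  · have h0 := hstep 0
    have h1 := hmin (u (0 + 1))
    have h2 := hmin (u 0)
    have h3 : F (u 0) - F ustar = 0 := by
      by_contra hne
      have : 0 < F (u 0) - F ustar := lt_of_le_of_ne (by linarith) (Ne.symm hne)
      nlinarith
    rw [h3, mul_zero]
    have := hle n
    linarith
end

section
/- Let V be a real reflexive Banach space, V₁, …, V_N closed subspaces of V, |·| a continuous seminorm on V, and F : V → ℝ convex and Gâteaux differentiable with Gâteaux derivative F', with F(v + φ) = F(v) for all v ∈ V and φ ∈ ker|·|. Let u ∈ V minimize F over V, let τ > 0 satisfy the strengthened convexity condition, and let (u^n) be generated by the PSC iteration with exact local problems from u⁰ ∈ V with F(u⁰) > F(u). Let p > q > 1 and suppose there exist constants C > 0 and μ > 0 such that: (i) for all v, w ∈ V with F(v) ≤ F(u⁰) and F(v + w) ≤ F(u⁰), there exist φ ∈ ker|·| and w_j ∈ V_j with Σ_{j=1}^N w_j = w + φ and Σ_{j=1}^N d_F(w_j; v) ≤ (C/q)|w|^q; (ii) F(v) − F(u) ≥ (μ/p)|v − u|^p for every v ∈ V with F(v) ≤ F(u⁰). Set ζ_n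 = F(u^n) − F(u). Then: if ζ₀ > (p/μ)^{q/(p−q)}·C^{p/(p−q)}, then ζ₁ ≤ (1 − τ(1 − 1/q))·ζ₀; and if ζ₀ ≤ (p/μ)^{q/(p−q)}·C^{p/(p−q)}, then for all n ≥ 0, ζ_n ≤ C''/(n + (C''/ζ₀)^{1/β})^β, where β = p(q−1)/(p−q) and C'' = (pq/((p−q)τ))^{p(q−1)/(p−q)}·(p/μ)^{q/(p−q)}·C^{p/(p−q)}. -/
lemma gateaux_le {V : Type*} [NormedAddCommGroup V] [NormedSpace ℝ V]
    {F : V → ℝ} (hconv : ConvexOn ℝ Set.univ F) {f : V →L[ℝ] ℝ} {v : V}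
    (h : HasGateauxDerivAt F f v) (d : V) : f d ≤ F (v + d) - F v := by
  have h1 : Filter.Tendsto (fun t : ℝ => (F (v + t • d) - F v) / t)
      (nhdsWithin (0 : ℝ) (Set.Ioi 0)) (nhds (f d)) :=
    (h d).mono_left (nhdsWithin_mono _ (fun x hx => ne_of_gt hx))
  refine le_of_tendsto h1 ?_
  have h2 : Set.Ioo (0:ℝ) 1 ∈ nhdsWithin (0 : ℝ) (Set.Ioi 0) :=
    Ioo_mem_nhdsGT one_pos
  filter_upwards [h2] with t ht
  have h3 := hconv.2 (Set.mem_univ v) (Set.mem_univ (v + d)) (sub_nonneg.2 ht.2.le) ht.1.le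
    (by ring)
  have h4 : (1 - t) • v + t • (v + d) = v + t • d := by module
  rw [h4] at h3
  simp only [smul_eq_mul] at h3
  rw [div_le_iff₀ ht.1]
  nlinarith

lemma gateaux_zero {V : Type*} [NormedAddCommGroup V] [NormedSpace ℝ V]
    {F : V → ℝ} {f : V →L[ℝ] ℝ} {v : V}
    (h : HasGateauxDerivAt F f v) (d : V) (hd : ∀ t : ℝ, F (v + t • d) = F v) : f d = 0 := by
  have h1 := h d
  simp only [hd, sub_self, zero_div] at h1
  exact tendsto_nhds_unique h1 tendsto_const_nhds

lemma bern (x r : ℝ) (hx : x < 1) (hr : 0 < r) : 1 + r * x ≤ ((1 - x)⁻¹) ^ r := by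
  have h0 : 0 < 1 - x := by linarith
  rw [Real.rpow_def_of_pos (inv_pos.2 h0), Real.log_inv]
  have h1 := Real.log_le_sub_one_of_pos h0
  have h2 := Real.add_one_le_exp (-Real.log (1 - x) * r)
  nlinarith

lemma sharp_bound (p q C μ E ζ S : ℝ) (hq : 1 < q) (hpq : q < p) (hC : 0 < C) (hμ : 0 < μ)
    (hE : E = (p / μ) ^ (q / (p - q)) * C ^ (p / (p - q))) (hζ : 0 < ζ) (hS : 0 ≤ S)
    (h : (μ / p) * S ^ p ≤ ζ) : C * S ^ q ≤ ζ * (E / ζ) ^ ((p - q) / p) := by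
  have hp : 0 < p := by linarith
  have hpq' : 0 < p - q := by linarith
  have hpm : 0 < p / μ := by positivity
  have hE0 : 0 < E := by rw [hE]; positivity
  have h1 : S ^ p ≤ (p / μ) * ζ := by
    have : S ^ p = (p / μ) * ((μ / p) * S ^ p) := by field_simp
    rw [this]
    exact mul_le_mul_of_nonneg_left h hpm.le
  have h2 : S ^ q ≤ (p / μ) ^ (q / p) * ζ ^ (q / p) := by
    rw [← Real.mul_rpow hpm.le hζ.le]
    have : S ^ q = (S ^ p) ^ (q / p) := by
      rw [← Real.rpow_mul hS]; congr 1; field_simp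
    rw [this]
    exact Real.rpow_le_rpow (by positivity) h1 (by positivity)
  have h3 : E ^ ((p - q) / p) = (p / μ) ^ (q / p) * C := by
    rw [hE, Real.mul_rpow (by positivity) (by positivity), ← Real.rpow_mul hpm.le,
      ← Real.rpow_mul hC.le]
    have e1 : q / (p - q) * ((p - q) / p) = q / p := by field_simp
    have e2 : p / (p - q) * ((p - q) / p) = 1 := by field_simp
    rw [e1, e2, Real.rpow_one]
  have h4 : ζ = ζ ^ (q / p) * ζ ^ ((p - q) / p) := by
    rw [← Real.rpow_add hζ]
    have : q / p + (p - q) / p = 1 := by field_simp; ring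
    rw [this, Real.rpow_one]
  have h5 : 0 < ζ ^ ((p - q) / p) := by positivity
  have h6 : ζ * (E / ζ) ^ ((p - q) / p) = C * ((p / μ) ^ (q / p) * ζ ^ (q / p)) := by
    rw [Real.div_rpow hE0.le hζ.le, h3, mul_div_assoc', div_eq_iff h5.ne']
    nth_rewrite 1 [h4]
    ring
  rw [h6]
  exact mul_le_mul_of_nonneg_left h2 hC.le

/-- improved sublinear convergence of the PSC method under a sharpness
condition with exponents `p > q` (Theorem 4.14(b)). Here `s` denotes the seminorm. -/
theorem stmt_10 {V : Type*} [NormedAddCommGroup V] [NormedSpace ℝ V] [CompleteSpace V]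
    (hrefl : Function.Surjective (NormedSpace.inclusionInDoubleDual ℝ V))
    (N : ℕ) (Vj : Fin N → Submodule ℝ V) (hVjc : ∀ j, IsClosed ((Vj j : Set V)))
    (s : Seminorm ℝ V) (hsc : Continuous (s : V → ℝ))
    (F : V → ℝ) (hconv : ConvexOn ℝ Set.univ F)
    (F' : V → V →L[ℝ] ℝ) (hF' : ∀ v : V, HasGateauxDerivAt F (F' v) v)
    (hinv : ∀ v φ : V, s φ = 0 → F (v + φ) = F v)
    (ustar : V) (hmin : ∀ v : V, F ustar ≤ F v)
    (τ : ℝ) (hτ : 0 < τ)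
    (hstrconv : ∀ (v : V) (z : Fin N → V), (∀ j, z j ∈ Vj j) →
      (1 - τ * (N : ℝ)) * F v + τ * ∑ j, F (v + z j) ≥ F (v + τ • ∑ j, z j))
    (u : ℕ → V) (w : ℕ → Fin N → V)
    (hwmem : ∀ n j, w n j ∈ Vj j)
    (hwmin : ∀ n j, ∀ x ∈ Vj j, F (u n + w n j) ≤ F (u n + x))
    (hupd : ∀ n : ℕ, u (n + 1) = u n + τ • ∑ j, w n j)
    (hinit : F ustar < F (u 0))
    (p q : ℝ) (hq : 1 < q) (hpq : q < p)
    (C μ : ℝ) (hC : 0 < C) (hμ : 0 < μ)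
    (hstable : ∀ v z : V, F v ≤ F (u 0) → F (v + z) ≤ F (u 0) →
      ∃ (φ : V) (wj : Fin N → V), s φ = 0 ∧ (∀ j, wj j ∈ Vj j) ∧
        (∑ j, wj j) = z + φ ∧
        (∑ j, (F (v + wj j) - F v - F' v (wj j))) ≤ (C / q) * (s z) ^ q)
    (hsharp : ∀ v : V, F v ≤ F (u 0) → (μ / p) * (s (v - ustar)) ^ p ≤ F v - F ustar)
    (β E C'' : ℝ)
    (hβ : β = p * (q - 1) / (p - q))
    (hE : E = (p / μ) ^ (q / (p - q)) * C ^ (p / (p - q)))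
    (hC'' : C'' = (p * q / ((p - q) * τ)) ^ (p * (q - 1) / (p - q)) *
      (p / μ) ^ (q / (p - q)) * C ^ (p / (p - q))) :
    (E < F (u 0) - F ustar →
      F (u 1) - F ustar ≤ (1 - τ * (1 - 1 / q)) * (F (u 0) - F ustar))
    ∧
    (F (u 0) - F ustar ≤ E →
      ∀ n : ℕ, F (u n) - F ustar ≤
        C'' / ((n : ℝ) + (C'' / (F (u 0) - F ustar)) ^ (1 / β)) ^ β) := by
  have hp : 0 < p := by linarith
  have hpq' : 0 < p - q := by linarith
  have hq0 : 0 < q := by linarith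
  have hq1 : 0 < q - 1 := by linarith
  have hpm : 0 < p / μ := by positivity
  have hE0 : 0 < E := by rw [hE]; positivity
  have hβ0 : 0 < β := by rw [hβ]; positivity
  -- the basic one-step estimate
  have step : ∀ n, F (u n) ≤ F (u 0) → ∀ t : ℝ, 0 ≤ t → t ≤ 1 →
      F (u (n + 1)) - F ustar ≤ (F (u n) - F ustar) - τ * t * (F (u n) - F ustar)
        + τ * ((C / q) * (t ^ q * s (u n - ustar) ^ q)) := by
    intro n hn t ht0 ht1
    have hz : F (u n + t • (ustar - u n)) ≤ F (u 0) := by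
      have h3 := hconv.2 (Set.mem_univ (u n)) (Set.mem_univ ustar) (sub_nonneg.2 ht1) ht0
        (by ring)
      have h4 : (1 - t) • u n + t • ustar = u n + t • (ustar - u n) := by module
      rw [h4] at h3
      simp only [smul_eq_mul] at h3
      have := hmin (u n)
      nlinarith
    obtain ⟨φ, wj, hφ, hwj, hsum, hb⟩ := hstable (u n) (t • (ustar - u n)) hn hz
    have hφ0 : F' (u n) φ = 0 := by
      refine gateaux_zero (hF' (u n)) φ fun a => hinv _ _ ?_
      rw [map_smul_eq_mul, hφ, mul_zero]
    have hd : F' (u n) (ustar - u n) ≤ F ustar - F (u n) := by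
      have := gateaux_le hconv (hF' (u n)) (ustar - u n)
      rwa [add_sub_cancel] at this
    have hs : s (t • (ustar - u n)) ^ q = t ^ q * s (u n - ustar) ^ q := by
      rw [map_smul_eq_mul, Real.norm_of_nonneg ht0, map_sub_rev,
        Real.mul_rpow ht0 (apply_nonneg s _)]
    have hlin : ∑ j, F' (u n) (wj j) = t * F' (u n) (ustar - u n) := by
      rw [← map_sum, hsum, map_add, hφ0, map_smul, smul_eq_mul, add_zero]
    have hsc1 := hstrconv (u n) (w n) (hwmem n)
    rw [← hupd n] at hsc1
    have hle : ∑ j, F (u n + w n j) ≤ ∑ j, F (u n + wj j) :=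
      Finset.sum_le_sum fun j _ => hwmin n j _ (hwj j)
    rw [hs] at hb
    rw [Finset.sum_sub_distrib, Finset.sum_sub_distrib, hlin] at hb
    simp only [Finset.sum_const, Finset.card_univ, Fintype.card_fin, nsmul_eq_mul] at hb
    have h5 : t * F' (u n) (ustar - u n) ≤ t * (F ustar - F (u n)) :=
      mul_le_mul_of_nonneg_left hd ht0
    have h6 : ∑ j, F (u n + w n j) ≤ N * F (u n) + t * (F ustar - F (u n))
        + (C / q) * (t ^ q * s (u n - ustar) ^ q) := by linarith
    have h7 := mul_le_mul_of_nonneg_left h6 hτ.le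
    linarith
  have mono1 : ∀ n, F (u n) ≤ F (u 0) → F (u (n + 1)) ≤ F (u n) := by
    intro n hn
    have := step n hn 0 le_rfl zero_le_one
    rw [Real.zero_rpow hq0.ne'] at this
    linarith
  have mono0 : ∀ n, F (u n) ≤ F (u 0) := by
    intro n
    induction n with
    | zero => exact le_rfl
    | succ k ih => exact (mono1 k ih).trans ih
  have step2 : ∀ n, 0 < F (u n) - F ustar → ∀ t : ℝ, 0 ≤ t → t ≤ 1 →
      F (u (n + 1)) - F ustar ≤ (F (u n) - F ustar) *
        (1 - τ * t + τ * (1 / q) * t ^ q * (E / (F (u n) - F ustar)) ^ ((p - q) / p)) := by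
    intro n hn t ht0 ht1
    have h1 := step n (mono0 n) t ht0 ht1
    have h2 := sharp_bound p q C μ E _ _ hq hpq hC hμ hE hn (apply_nonneg s _)
      (hsharp (u n) (mono0 n))
    have h3 : 0 ≤ τ * (1 / q) * t ^ q := by positivity
    have h4 := mul_le_mul_of_nonneg_left h2 h3
    have h5 : τ * ((C / q) * (t ^ q * s (u n - ustar) ^ q))
      = τ * (1 / q) * t ^ q * (C * s (u n - ustar) ^ q) := by ring
    rw [h5] at h1
    linarith
  have hζ0 : 0 < F (u 0) - F ustar := by linarith
  constructor
  · intro hlt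
    have h1 := step2 0 hζ0 1 zero_le_one le_rfl
    have h2 : (E / (F (u 0) - F ustar)) ^ ((p - q) / p) ≤ 1 := by
      apply Real.rpow_le_one (by positivity) _ (by positivity)
      rw [div_le_one hζ0]; exact hlt.le
    rw [Real.one_rpow] at h1
    refine h1.trans ?_
    rw [mul_comm]
    refine mul_le_mul_of_nonneg_right ?_ hζ0.le
    have : τ * (1 / q) * (E / (F (u 0) - F ustar)) ^ ((p - q) / p) ≤ τ * (1 / q) * 1 :=
      mul_le_mul_of_nonneg_left h2 (by positivity)
    linarith
  · intro hle
    set A : ℝ := p * q / ((p - q) * τ) with hA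
    have hA0 : 0 < A := by positivity
    have hCE : C'' = A ^ β * E := by rw [hC'', hE, hβ]; ring
    have hC0 : 0 < C'' := by rw [hCE]; positivity
    have step3 : ∀ n, 0 < F (u n) - F ustar → F (u (n + 1)) - F ustar ≤ (F (u n) - F ustar) *
        (1 - τ * (1 - 1 / q) * ((F (u n) - F ustar) / E) ^ (1 / β)) := by
      intro n hn
      set ζ := F (u n) - F ustar with hζ
      have hζE : ζ / E ≤ 1 := by
        rw [div_le_one hE0]; have := mono0 n; linarith
      have hζE0 : 0 < ζ / E := by positivity
      have h1 := step2 n hn ((ζ / E) ^ (1 / β)) (by positivity)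
        (Real.rpow_le_one hζE0.le hζE (by positivity))
      have h2 : ((ζ / E) ^ (1 / β)) ^ q * (E / ζ) ^ ((p - q) / p) = (ζ / E) ^ (1 / β) := by
        rw [← inv_div ζ E, Real.inv_rpow hζE0.le, ← Real.rpow_neg hζE0.le,
          ← Real.rpow_mul hζE0.le, ← Real.rpow_add hζE0]
        congr 1
        rw [hβ]; field_simp; ring
      rw [← hζ, mul_assoc (τ * (1 / q)), h2] at h1
      refine h1.trans (le_of_eq ?_)
      ring
    have key : ∀ n : ℕ, 0 < F (u n) - F ustar →
        (n : ℝ) + (C'' / (F (u 0) - F ustar)) ^ (1 / β) ≤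
          (C'' / (F (u n) - F ustar)) ^ (1 / β) := by
      intro n
      induction n with
      | zero => intro _; simp
      | succ k ih =>
        intro hpos
        have hk : 0 < F (u k) - F ustar := by
          have := mono1 k (mono0 k); linarith
        have ihk := ih hk
        have h3 := step3 k hk
        set ζ := F (u k) - F ustar with hζ
        set ζ' := F (u (k + 1)) - F ustar with hζ'
        set x := τ * (1 - 1 / q) * (ζ / E) ^ (1 / β) with hx
        have hx1 : 0 < 1 - x := by
          by_contra hcon
          have := mul_nonpos_of_nonneg_of_nonpos hk.le (not_lt.1 hcon)
          linarith
        have hb := bern x (1 / β) (by linarith) (by positivity)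
        have h4 : C'' / ζ * (1 - x)⁻¹ ≤ C'' / ζ' := by
          rw [← div_eq_mul_inv, div_div]
          exact div_le_div_of_nonneg_left hC0.le hpos h3
        have h5 : (C'' / ζ) ^ (1 / β) * ((1 - x)⁻¹) ^ (1 / β) ≤ (C'' / ζ') ^ (1 / β) := by
          rw [← Real.mul_rpow (by positivity) (by positivity)]
          exact Real.rpow_le_rpow (by positivity) h4 (by positivity)
        have h6 : (C'' / ζ) ^ (1 / β) * (1 + 1 / β * x) ≤
            (C'' / ζ) ^ (1 / β) * ((1 - x)⁻¹) ^ (1 / β) :=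
          mul_le_mul_of_nonneg_left hb (by positivity)
        have h7 : (C'' / ζ) ^ (1 / β) * (ζ / E) ^ (1 / β) = A := by
          rw [← Real.mul_rpow (by positivity) (by positivity)]
          have : C'' / ζ * (ζ / E) = A ^ β := by rw [hCE]; field_simp
          rw [this, ← Real.rpow_mul hA0.le, mul_one_div_cancel hβ0.ne', Real.rpow_one]
        have h8 : (C'' / ζ) ^ (1 / β) * (1 / β * x) = 1 := by
          have : (C'' / ζ) ^ (1 / β) * (1 / β * x) = 1 / β * τ * (1 - 1 / q) *
            ((C'' / ζ) ^ (1 / β) * (ζ / E) ^ (1 / β)) := by rw [hx]; ring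
          rw [this, h7, hA, hβ]; field_simp
        push_cast
        linarith
    intro n
    have hXpos : 0 < (n : ℝ) + (C'' / (F (u 0) - F ustar)) ^ (1 / β) := by
      have : 0 < (C'' / (F (u 0) - F ustar)) ^ (1 / β) := by positivity
      positivity
    rcases (sub_nonneg.2 (hmin (u n))).lt_or_eq with hpos | hzero
    · have h1 := Real.rpow_le_rpow hXpos.le (key n hpos) hβ0.le
      rw [← Real.rpow_mul (by positivity), one_div_mul_cancel hβ0.ne', Real.rpow_one] at h1
      rw [le_div_iff₀ (by positivity)]
      rw [le_div_iff₀ hpos] at h1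
      linarith
    · rw [← hzero]; positivity
end

section
/- Let V be a real reflexive Banach space and let M be a closed subspace of V. Define J*M° := {ξ ∈ V : there exists f ∈ V* with f(m) = 0 for all m ∈ M, f(ξ) = ‖ξ‖², and ‖f‖ = ‖ξ‖}. Then: (1) for every v ∈ V there exists φ ∈ M with ‖v − φ‖ ≤ ‖v − w‖ for all w ∈ M, and for every such minimizer φ one has v − φ ∈ J*M°; in particular V = M + J*M°; (2) M ∩ J*M° = {0}. -/
theorem aux_ext {W : Type*} [NormedAddCommGroup W] [NormedSpace ℝ W]
    (N : Submodule ℝ W) (G : StrongDual ℝ W) :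
    ∃ G' : StrongDual ℝ W, (∀ f ∈ N, G' f = G f) ∧
      ∀ C : ℝ, 0 ≤ C → (∀ f ∈ N, ‖G f‖ ≤ C * ‖f‖) → ‖G'‖ ≤ C := by
  obtain ⟨G', h1, h2⟩ := exists_extension_norm_eq N (G.comp N.subtypeL)
  refine ⟨G', fun f hf => h1 ⟨f, hf⟩, fun C hC h => ?_⟩
  rw [h2]
  exact ContinuousLinearMap.opNorm_le_bound _ hC fun f => h f f.2

theorem aux_dual {V : Type*} [NormedAddCommGroup V] [NormedSpace ℝ V]
    (M : Submodule ℝ V) (x : V) :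
    ∃ g : V →L[ℝ] ℝ, (∀ m ∈ M, g m = 0) ∧ ‖g‖ ≤ 1 ∧ g x = Metric.infDist x (M : Set V) := by
  obtain ⟨g, hg1, hg2⟩ := exists_dual_vector'' ℝ (Submodule.Quotient.mk x : V ⧸ M)
  have hb : ∀ y : V, ‖(g.toLinearMap ∘ₗ M.mkQ) y‖ ≤ 1 * ‖y‖ := by
    intro y
    calc ‖g (Submodule.Quotient.mk y : V ⧸ M)‖ ≤ ‖g‖ * ‖(Submodule.Quotient.mk y : V ⧸ M)‖ :=
          g.le_opNorm _
      _ ≤ 1 * ‖y‖ := by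
          gcongr
          exact Submodule.Quotient.norm_mk_le M y
  refine ⟨(g.toLinearMap ∘ₗ M.mkQ).mkContinuous 1 hb, ?_, ?_, ?_⟩
  · intro m hm
    have : (Submodule.Quotient.mk m : V ⧸ M) = 0 := (Submodule.Quotient.mk_eq_zero M).2 hm
    simp [this]
  · exact LinearMap.mkContinuous_norm_le _ zero_le_one _
  · have : ‖(Submodule.Quotient.mk x : V ⧸ M)‖ = Metric.infDist x (M : Set V) :=
      QuotientAddGroup.norm_mk (S := M.toAddSubgroup) x
    rw [← this]
    exact hg2

/-- orthogonal-type decomposition `V = M + J*M°` of a reflexive Banach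
space along a closed subspace `M` (Proposition 5.1). -/
theorem stmt_11 {V : Type*} [NormedAddCommGroup V] [NormedSpace ℝ V] [CompleteSpace V]
    (hrefl : Function.Surjective (NormedSpace.inclusionInDoubleDual ℝ V))
    (M : Submodule ℝ V) (hMc : IsClosed (M : Set V)) :
    (∀ v : V, ∃ φ ∈ M, ∀ w ∈ M, ‖v - φ‖ ≤ ‖v - w‖)
    ∧
    (∀ v φ : V, φ ∈ M → (∀ w ∈ M, ‖v - φ‖ ≤ ‖v - w‖) →
      ∃ f : V →L[ℝ] ℝ, (∀ m ∈ M, f m = 0) ∧ f (v - φ) = ‖v - φ‖ ^ 2 ∧ ‖f‖ = ‖v - φ‖)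
    ∧
    (∀ v : V, ∃ φ ∈ M, ∃ ξ : V,
      (∃ f : V →L[ℝ] ℝ, (∀ m ∈ M, f m = 0) ∧ f ξ = ‖ξ‖ ^ 2 ∧ ‖f‖ = ‖ξ‖) ∧
      v = φ + ξ)
    ∧
    (∀ x : V, x ∈ M →
      (∃ f : V →L[ℝ] ℝ, (∀ m ∈ M, f m = 0) ∧ f x = ‖x‖ ^ 2 ∧ ‖f‖ = ‖x‖) →
      x = 0) := by
  have hne : (M : Set V).Nonempty := ⟨0, M.zero_mem⟩
  have h1 : ∀ v : V, ∃ φ ∈ M, ∀ w ∈ M, ‖v - φ‖ ≤ ‖v - w‖ := by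
    intro v
    obtain ⟨N, hN⟩ : ∃ N : Submodule ℝ (StrongDual ℝ V), ∀ f, f ∈ N ↔ ∀ m ∈ M, f m = 0 :=
      ⟨{ carrier := {f | ∀ m ∈ M, f m = 0}
         add_mem' := by
          intro a b ha hb m hm
          simp [ha m hm, hb m hm]
         zero_mem' := by
          intro m hm
          simp
         smul_mem' := by
          intro c a ha m hm
          simp [ha m hm] }, fun f => Iff.rfl⟩
    obtain ⟨G, hG1, hG2⟩ := aux_ext N (NormedSpace.inclusionInDoubleDual ℝ V v)
    obtain ⟨ξ, rfl⟩ := hrefl G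
    have hξ : ‖ξ‖ = ‖NormedSpace.inclusionInDoubleDual ℝ V ξ‖ :=
      ((NormedSpace.inclusionInDoubleDualLi ℝ (E := V)).norm_map ξ).symm
    refine ⟨v - ξ, ?_, fun w hw => ?_⟩
    · obtain ⟨g, hg0, -, hg⟩ := aux_dual M (v - ξ)
      have h : g ξ = g v := hG1 g ((hN g).2 hg0)
      rw [map_sub, h, sub_self] at hg
      exact (hMc.mem_iff_infDist_zero hne).2 hg.symm
    · rw [sub_sub_cancel, hξ]
      refine hG2 _ (norm_nonneg _) fun f hf => ?_
      have e : NormedSpace.inclusionInDoubleDual ℝ V v f = f (v - w) := by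
        rw [map_sub, (hN _).1 hf w hw, sub_zero]
        rfl
      rw [e, mul_comm]
      exact f.le_opNorm _
  have h2 : ∀ v φ : V, φ ∈ M → (∀ w ∈ M, ‖v - φ‖ ≤ ‖v - w‖) →
      ∃ f : V →L[ℝ] ℝ, (∀ m ∈ M, f m = 0) ∧ f (v - φ) = ‖v - φ‖ ^ 2 ∧ ‖f‖ = ‖v - φ‖ := by
    intro v φ hφ hmin
    obtain ⟨g, hg0, hg1, hg⟩ := aux_dual M (v - φ)
    have hd : Metric.infDist (v - φ) (M : Set V) = ‖v - φ‖ := by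
      apply le_antisymm
      · simpa using Metric.infDist_le_dist_of_mem (x := v - φ) (M.zero_mem)
      · refine (Metric.le_infDist hne).2 fun {y} hy => ?_
        rw [dist_eq_norm, sub_sub]
        exact hmin _ (M.add_mem hφ hy)
    rw [hd] at hg
    have hval : (‖v - φ‖ • g) (v - φ) = ‖v - φ‖ ^ 2 := by
      simp only [smul_apply, hg, smul_eq_mul]
      ring
    refine ⟨‖v - φ‖ • g, fun m hm => by simp [hg0 m hm], hval, le_antisymm ?_ ?_⟩
    · rw [norm_smul, norm_norm]
      exact mul_le_of_le_one_right (norm_nonneg _) hg1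
    · rcases (norm_nonneg (v - φ)).eq_or_lt with h | h
      · rw [← h]
        exact norm_nonneg _
      · have := (‖v - φ‖ • g).le_opNorm (v - φ)
        rw [hval, Real.norm_of_nonneg (by positivity), pow_two] at this
        exact le_of_mul_le_mul_right this h
  refine ⟨h1, h2, fun v => ?_, ?_⟩
  · obtain ⟨φ, hφ, hmin⟩ := h1 v
    exact ⟨φ, hφ, v - φ, h2 v φ hφ hmin, by abel⟩
  · rintro x hx ⟨f, hf0, hf, -⟩
    rw [hf0 x hx] at hf
    exact norm_eq_zero.1 (pow_eq_zero_iff (two_ne_zero)|>.1 hf.symm)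
end

section
/- Let V be a real normed vector space, let M be a closed subspace of V, and define J*M° := {ξ ∈ V : there exists f ∈ V* with f(m) = 0 for all m ∈ M, f(ξ) = ‖ξ‖², and ‖f‖ = ‖ξ‖}. Then for every q ≥ 1, every φ ∈ M, and every ξ ∈ J*M°: ‖φ‖^q + ‖ξ‖^q ≤ (2^q + 1)·‖φ + ξ‖^q. -/
/-- for `φ ∈ M` and `ξ ∈ J*M°` one has
`‖φ‖^q + ‖ξ‖^q ≤ (2^q + 1)·‖φ + ξ‖^q` (Corollary 5.2(a)). -/
theorem stmt_12 {V : Type*} [NormedAddCommGroup V] [NormedSpace ℝ V]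
    (M : Submodule ℝ V) (hMc : IsClosed (M : Set V))
    (q : ℝ) (hq : 1 ≤ q)
    (φ : V) (hφ : φ ∈ M) (ξ : V)
    (hξ : ∃ f : V →L[ℝ] ℝ, (∀ m ∈ M, f m = 0) ∧ f ξ = ‖ξ‖ ^ 2 ∧ ‖f‖ = ‖ξ‖) :
    ‖φ‖ ^ q + ‖ξ‖ ^ q ≤ ((2 : ℝ) ^ q + 1) * ‖φ + ξ‖ ^ q := by
  obtain ⟨f, hf, h1, h2⟩ := hξ
  have hle : ‖ξ‖ ≤ ‖φ + ξ‖ := by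
    have h3 : f (φ + ξ) = ‖ξ‖ ^ 2 := by rw [map_add, hf φ hφ, h1, zero_add]
    have h4 := f.le_opNorm (φ + ξ)
    rw [h3, h2, Real.norm_eq_abs, abs_of_nonneg (by positivity)] at h4
    rcases (norm_nonneg ξ).eq_or_lt with h0 | h0
    · rw [← h0]; exact norm_nonneg _
    · rw [pow_two] at h4
      exact le_of_mul_le_mul_left h4 h0
  have hle2 : ‖φ‖ ≤ 2 * ‖φ + ξ‖ := by
    have h5 := norm_sub_le (φ + ξ) ξ
    rw [add_sub_cancel_right] at h5
    linarith
  have hq0 : 0 ≤ q := by linarith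
  have h6 := Real.rpow_le_rpow (norm_nonneg ξ) hle hq0
  have h7 := Real.rpow_le_rpow (norm_nonneg φ) hle2 hq0
  rw [Real.mul_rpow (by norm_num) (norm_nonneg _)] at h7
  linarith
end

section
/- Let V be a real Banach space, V₁, …, V_N closed subspaces of V, and |·| a continuous seminorm on V with kernel 𝒩 = ker|·| such that there exists C♯ > 0 with inf_{ψ ∈ 𝒩} ‖v + ψ‖ ≤ C♯|v| for all v ∈ V. Let F₀, F₁ : V → ℝ be convex and Gâteaux differentiable with Gâteaux derivatives F₀', F₁', with F₀(v + ψ) = F₀(v) for all v ∈ V and ψ ∈ 𝒩. Let ε > 0, q > 1, and let C_tri > 0 satisfy d_{F₁}(x + y; v) ≤ C_tri·(d_{F₁}(x; v) + d_{F₁}(y; v)) for all v, x, y ∈ V. Fix v ∈ V, let φ ∈ 𝒩 with φ ≠ 0 and ξ ∈ J*𝒩° with ξ ≠ 0, and suppose φ = Σ_{j=1}^N φ_j with φ_j ∈ V_j ∩ 𝒩 and ξ = Σ_{j=1}^N ξ_j with ξ_j ∈ V_j. Then |φ + ξ|^q + ε‖φ + ξ‖^q > 0 and (Σ_{j=1}^N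 [d_{F₀}(φ_j + ξ_j; v) + ε·d_{F₁}(φ_j + ξ_j; v)]) / (|φ + ξ|^q + ε‖φ + ξ‖^q) ≤ Σ_{j=1}^N d_{F₀}(ξ_j; v)/|ξ|^q + (2^q + 1)·C_tri·Σ_{j=1}^N (d_{F₁}(φ_j; v)/‖φ‖^q + d_{F₁}(ξ_j; v)/‖ξ‖^q). -/
theorem bregman_nonneg_aux {V : Type*} [NormedAddCommGroup V] [NormedSpace ℝ V]
    (F : V → ℝ) (f : V →L[ℝ] ℝ) (v : V) (hc : ConvexOn ℝ Set.univ F)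
    (hf : HasGateauxDerivAt F f v) (w : V) : 0 ≤ F (v + w) - F v - f w := by
  have h1 : Filter.Tendsto (fun t : ℝ => (F (v + t • w) - F v) / t)
      (nhdsWithin (0 : ℝ) (Set.Ioi 0)) (nhds (f w)) :=
    (hf w).mono_left (nhdsWithin_mono _ (fun x hx => ne_of_gt hx))
  have h2 : f w ≤ F (v + w) - F v := by
    refine le_of_tendsto h1 ?_
    have : Set.Ioo (0 : ℝ) 1 ∈ nhdsWithin (0 : ℝ) (Set.Ioi 0) :=
      Ioo_mem_nhdsGT one_pos
    filter_upwards [this] with t ht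
    rw [div_le_iff₀ ht.1]
    have h3 := hc.2 (Set.mem_univ v) (Set.mem_univ (v + w)) (sub_nonneg.2 ht.2.le) ht.1.le
      (by ring)
    have h4 : (1 - t) • v + t • (v + w) = v + t • w := by module
    rw [h4] at h3
    simp only [smul_eq_mul] at h3
    linarith
  linarith

theorem gateaux_ker_aux {V : Type*} [NormedAddCommGroup V] [NormedSpace ℝ V]
    (F : V → ℝ) (f : V →L[ℝ] ℝ) (v : V) (s : Seminorm ℝ V)
    (hinv : ∀ v ψ : V, s ψ = 0 → F (v + ψ) = F v)
    (hf : HasGateauxDerivAt F f v) (w : V) (hw : s w = 0) : f w = 0 := by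
  have h := hf w
  have h2 : (fun t : ℝ => (F (v + t • w) - F v) / t) = fun _ => 0 := by
    funext t
    rw [hinv v (t • w) (by rw [map_smul_eq_mul, hw, mul_zero])]
    simp
  rw [h2] at h
  exact tendsto_nhds_unique h tendsto_const_nhds

theorem frac_aux (A B P Q S m a b c C e : ℝ) (hA : 0 ≤ A) (hP : 0 ≤ P) (hQ : 0 ≤ Q)
    (hS : 0 < S) (hm : 0 < m) (ha : 0 < a) (hb : 0 < b) (hc : 0 < c) (hC : 0 < C) (he : 0 < e)
    (hB : B ≤ C * (P + Q)) (ham : a ≤ c * m) (hbm : b ≤ m) :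
    (A + e * B) / (S + e * m) ≤ A / S + (c + 1) * C * (P / a + Q / b) := by
  have h1 : A / (S + e * m) ≤ A / S :=
    div_le_div_of_nonneg_left hA hS (by nlinarith [mul_pos he hm])
  have h2 : e * B / (S + e * m) ≤ C * (P + Q) / m := by
    rw [div_le_div_iff₀ (by positivity) hm]
    have : 0 ≤ C * (P + Q) * S := by positivity
    nlinarith [mul_le_mul_of_nonneg_left hB (mul_pos he hm).le]
  have h3 : P / m ≤ c * (P / a) := by
    rw [← mul_div_assoc, div_le_div_iff₀ hm ha]
    nlinarith [mul_le_mul_of_nonneg_left ham hP]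
  have h4 : Q / m ≤ Q / b := div_le_div_of_nonneg_left hQ hb hbm
  have h5 : 0 ≤ P / a := by positivity
  have h6 : 0 ≤ c * (Q / b) := by positivity
  have h7 : C * (P + Q) / m = C * (P / m + Q / m) := by ring
  have h8 : C * (P / m + Q / m) ≤ C * ((c + 1) * (P / a + Q / b)) :=
    mul_le_mul_of_nonneg_left (by nlinarith) hC.le
  rw [add_div]
  nlinarith

/-- the key estimate in the ε-independent bound for nearly semicoercive
problems (from the proof of Theorem 5.6). Here `s` is the seminorm whose kernel is
`𝒩 = ker s`, and `ξ ∈ J*𝒩°`. -/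
theorem stmt_14 {V : Type*} [NormedAddCommGroup V] [NormedSpace ℝ V] [CompleteSpace V]
    (N : ℕ) (Vj : Fin N → Submodule ℝ V) (hVjc : ∀ j, IsClosed ((Vj j : Set V)))
    (s : Seminorm ℝ V) (hscont : Continuous (s : V → ℝ))
    (Csharp : ℝ) (hCsharp : 0 < Csharp)
    (hquot : ∀ v : V, (⨅ ψ : {x : V // s x = 0}, ‖v + (ψ : V)‖) ≤ Csharp * s v)
    (F₀ F₁ : V → ℝ)
    (hconv₀ : ConvexOn ℝ Set.univ F₀) (hconv₁ : ConvexOn ℝ Set.univ F₁)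
    (F₀' F₁' : V → V →L[ℝ] ℝ)
    (hF₀' : ∀ v : V, HasGateauxDerivAt F₀ (F₀' v) v)
    (hF₁' : ∀ v : V, HasGateauxDerivAt F₁ (F₁' v) v)
    (hinv : ∀ v ψ : V, s ψ = 0 → F₀ (v + ψ) = F₀ v)
    (ε : ℝ) (hε : 0 < ε) (q : ℝ) (hq : 1 < q)
    (Ctri : ℝ) (hCtri : 0 < Ctri)
    (htri : ∀ v x y : V,
      F₁ (v + (x + y)) - F₁ v - F₁' v (x + y) ≤
        Ctri * ((F₁ (v + x) - F₁ v - F₁' v x) + (F₁ (v + y) - F₁ v - F₁' v y)))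
    (v φ ξ : V) (hφ : s φ = 0) (hφne : φ ≠ 0)
    (hξ : ∃ f : V →L[ℝ] ℝ, (∀ ψ : V, s ψ = 0 → f ψ = 0) ∧ f ξ = ‖ξ‖ ^ 2 ∧ ‖f‖ = ‖ξ‖)
    (hξne : ξ ≠ 0)
    (φj ξj : Fin N → V)
    (hφj : ∀ j, φj j ∈ Vj j ∧ s (φj j) = 0) (hξj : ∀ j, ξj j ∈ Vj j)
    (hφsum : (∑ j, φj j) = φ) (hξsum : (∑ j, ξj j) = ξ) :
    0 < (s (φ + ξ)) ^ q + ε * ‖φ + ξ‖ ^ q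
    ∧
    (∑ j, ((F₀ (v + (φj j + ξj j)) - F₀ v - F₀' v (φj j + ξj j)) +
        ε * (F₁ (v + (φj j + ξj j)) - F₁ v - F₁' v (φj j + ξj j)))) /
      ((s (φ + ξ)) ^ q + ε * ‖φ + ξ‖ ^ q)
    ≤ (∑ j, (F₀ (v + ξj j) - F₀ v - F₀' v (ξj j))) / (s ξ) ^ q
      + ((2 : ℝ) ^ q + 1) * Ctri *
        ∑ j, ((F₁ (v + φj j) - F₁ v - F₁' v (φj j)) / ‖φ‖ ^ q +
              (F₁ (v + ξj j) - F₁ v - F₁' v (ξj j)) / ‖ξ‖ ^ q) := by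
  obtain ⟨f, hf0, hfξ, hfn⟩ := hξ
  have hξp : 0 < ‖ξ‖ := norm_pos_iff.2 hξne
  have hφp : 0 < ‖φ‖ := norm_pos_iff.2 hφne
  have hsξ : 0 < s ξ := by
    refine lt_of_le_of_ne (apply_nonneg s ξ) (fun h => ?_)
    have := hf0 ξ h.symm
    rw [hfξ] at this
    exact absurd this (by positivity)
  have hs : s (φ + ξ) = s ξ := by
    apply le_antisymm
    · have := map_add_le_add s φ ξ
      linarith
    · have := map_add_le_add s (φ + ξ) (-φ)
      rw [map_neg_eq_map, hφ] at this
      simpa using this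
  have hm : ‖ξ‖ ≤ ‖φ + ξ‖ := by
    have h := f.le_opNorm (φ + ξ)
    rw [map_add, hf0 φ hφ, hfξ, zero_add, hfn, Real.norm_of_nonneg (by positivity), sq] at h
    exact le_of_mul_le_mul_left h hξp
  have hm2 : ‖φ‖ ≤ 2 * ‖φ + ξ‖ := by
    have : ‖φ‖ ≤ ‖φ + ξ‖ + ‖ξ‖ := by
      simpa using norm_sub_le (φ + ξ) ξ
    linarith
  have hmp : 0 < ‖φ + ξ‖ := hξp.trans_le hm
  have hq0 : 0 ≤ q := by linarith
  have hS : 0 < (s ξ) ^ q := Real.rpow_pos_of_pos hsξ q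
  have hM : 0 < ‖φ + ξ‖ ^ q := Real.rpow_pos_of_pos hmp q
  rw [hs]
  refine ⟨by positivity, ?_⟩
  have e0 : ∀ j, F₀ (v + (φj j + ξj j)) - F₀ v - F₀' v (φj j + ξj j)
      = F₀ (v + ξj j) - F₀ v - F₀' v (ξj j) := by
    intro j
    have h1 : v + (φj j + ξj j) = (v + ξj j) + φj j := by abel
    rw [h1, hinv _ _ (hφj j).2, map_add,
      gateaux_ker_aux F₀ (F₀' v) v s hinv (hF₀' v) _ (hφj j).2, zero_add]
  simp only [e0]
  rw [Finset.sum_add_distrib, Finset.sum_add_distrib, ← Finset.mul_sum, ← Finset.sum_div,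
    ← Finset.sum_div]
  refine frac_aux _ _ _ _ _ _ _ _ _ _ _
    (Finset.sum_nonneg fun j _ => bregman_nonneg_aux _ _ _ hconv₀ (hF₀' v) _)
    (Finset.sum_nonneg fun j _ => bregman_nonneg_aux _ _ _ hconv₁ (hF₁' v) _)
    (Finset.sum_nonneg fun j _ => bregman_nonneg_aux _ _ _ hconv₁ (hF₁' v) _)
    hS hM (by positivity) (by positivity) (by positivity) hCtri hε ?_ ?_ ?_
  · rw [← Finset.sum_add_distrib, Finset.mul_sum]
    exact Finset.sum_le_sum fun j _ => htri v _ _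
  · rw [← Real.mul_rpow (by norm_num) hmp.le]
    exact Real.rpow_le_rpow hφp.le hm2 hq0
  · exact Real.rpow_le_rpow hξp.le hm hq0
end

section
/- Let V be a real normed vector space, |·| a continuous seminorm on V, and F₀, F₁ : V → ℝ convex and Gâteaux differentiable with Gâteaux derivatives F₀', F₁'. Let ε ∈ (0, 1), let p ≥ q with q > 1, set F = F₀ + ε·F₁, and let u ∈ V minimize F over V. Suppose there are constants μ₀, μ₁ > 0 and a set W ⊆ V such that for all w ∈ W: d_{F₀}(w; u) ≥ (μ₀/p)·|w|^p and d_{F₁}(w; u) ≥ (μ₁/p)·‖w‖^p. Then for every w ∈ W: F(u + w) − F(u) ≥ (min{μ₀, μ₁}/(p·2^{p/q − 1}))·(|w|^q + ε‖w‖^q)^{p/q}. -/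
theorem add_rpow_aux {x y r : ℝ} (hx : 0 ≤ x) (hy : 0 ≤ y) (hr : 1 ≤ r) :
    (x + y) ^ r ≤ 2 ^ (r - 1) * (x ^ r + y ^ r) := by
  have h := NNReal.rpow_add_le_mul_rpow_add_rpow ⟨x, hx⟩ ⟨y, hy⟩ hr
  exact_mod_cast h

/-- ε-independent sharpness of the nearly semicoercive energy
`F = F₀ + ε·F₁` around its minimizer (Theorem 5.7). Here `s` is the seminorm. -/
theorem stmt_15 {V : Type*} [NormedAddCommGroup V] [NormedSpace ℝ V]
    (s : Seminorm ℝ V) (hscont : Continuous (s : V → ℝ))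
    (F₀ F₁ : V → ℝ)
    (hconv₀ : ConvexOn ℝ Set.univ F₀) (hconv₁ : ConvexOn ℝ Set.univ F₁)
    (F₀' F₁' : V → V →L[ℝ] ℝ)
    (hF₀' : ∀ v : V, HasGateauxDerivAt F₀ (F₀' v) v)
    (hF₁' : ∀ v : V, HasGateauxDerivAt F₁ (F₁' v) v)
    (ε : ℝ) (hε0 : 0 < ε) (hε1 : ε < 1)
    (p q : ℝ) (hq : 1 < q) (hpq : q ≤ p)
    (u : V) (hmin : ∀ v : V, F₀ u + ε * F₁ u ≤ F₀ v + ε * F₁ v)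
    (μ₀ μ₁ : ℝ) (hμ₀ : 0 < μ₀) (hμ₁ : 0 < μ₁)
    (W : Set V)
    (h₀ : ∀ w ∈ W, (μ₀ / p) * (s w) ^ p ≤ F₀ (u + w) - F₀ u - F₀' u w)
    (h₁ : ∀ w ∈ W, (μ₁ / p) * ‖w‖ ^ p ≤ F₁ (u + w) - F₁ u - F₁' u w) :
    ∀ w ∈ W,
      (min μ₀ μ₁ / (p * (2 : ℝ) ^ (p / q - 1))) *
          ((s w) ^ q + ε * ‖w‖ ^ q) ^ (p / q)
        ≤ (F₀ (u + w) + ε * F₁ (u + w)) - (F₀ u + ε * F₁ u) := by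
  intro w hw
  have hd : 0 ≤ F₀' u w + ε * F₁' u w := by
    have hT := ((hF₀' u w).add ((hF₁' u w).const_mul ε)).mono_left
      (nhdsWithin_mono (0 : ℝ) (s := Set.Ioi 0) (fun t ht => ne_of_gt ht))
    refine ge_of_tendsto hT ?_
    filter_upwards [self_mem_nhdsWithin] with t ht
    have ht' : (0 : ℝ) < t := ht
    have h := hmin (u + t • w)
    have e : (F₀ (u + t • w) - F₀ u) / t + ε * ((F₁ (u + t • w) - F₁ u) / t)
        = ((F₀ (u + t • w) + ε * F₁ (u + t • w)) - (F₀ u + ε * F₁ u)) / t := by ring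
    rw [e]
    exact div_nonneg (by linarith) ht'.le
  have hp : 0 < p := by linarith
  have hq0 : 0 < q := by linarith
  have hr : 1 ≤ p / q := (one_le_div hq0).2 hpq
  have ha : 0 ≤ s w := apply_nonneg s w
  have hb : 0 ≤ ‖w‖ := norm_nonneg w
  have hap : 0 ≤ (s w) ^ p := Real.rpow_nonneg ha p
  have hbp : 0 ≤ ‖w‖ ^ p := Real.rpow_nonneg hb p
  have hqr : q * (p / q) = p := by field_simp
  have hεr : ε ^ (p / q) ≤ ε := by
    simpa using Real.rpow_le_rpow_of_exponent_ge hε0 hε1.le hr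
  have key := add_rpow_aux (Real.rpow_nonneg ha q)
    (mul_nonneg hε0.le (Real.rpow_nonneg hb q)) hr
  rw [Real.mul_rpow hε0.le (Real.rpow_nonneg hb q), ← Real.rpow_mul ha, ← Real.rpow_mul hb,
    hqr] at key
  have h2 : (0 : ℝ) < 2 ^ (p / q - 1) := Real.rpow_pos_of_pos two_pos _
  have key2 : ((s w) ^ q + ε * ‖w‖ ^ q) ^ (p / q)
      ≤ 2 ^ (p / q - 1) * ((s w) ^ p + ε * ‖w‖ ^ p) := by
    refine key.trans ?_
    gcongr
  have hm : 0 < min μ₀ μ₁ := lt_min hμ₀ hμ₁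
  calc (min μ₀ μ₁ / (p * (2 : ℝ) ^ (p / q - 1))) * ((s w) ^ q + ε * ‖w‖ ^ q) ^ (p / q)
      ≤ (min μ₀ μ₁ / (p * (2 : ℝ) ^ (p / q - 1))) *
          (2 ^ (p / q - 1) * ((s w) ^ p + ε * ‖w‖ ^ p)) := by gcongr
    _ = (min μ₀ μ₁ / p) * (s w) ^ p + ε * ((min μ₀ μ₁ / p) * ‖w‖ ^ p) := by
        field_simp
    _ ≤ (μ₀ / p) * (s w) ^ p + ε * ((μ₁ / p) * ‖w‖ ^ p) := by
        gcongr
        · exact min_le_left _ _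
        · exact min_le_right _ _
    _ ≤ (F₀ (u + w) - F₀ u - F₀' u w) + ε * (F₁ (u + w) - F₁ u - F₁' u w) := by
        have := h₀ w hw
        have := h₁ w hw
        gcongr
    _ ≤ _ := by linarith
end

section
/- Let V be a real reflexive Banach space, V_j a closed subspace of V, and F : V → ℝ convex and Gâteaux differentiable with Gâteaux derivative F'. Fix v ∈ V. Let F_j(·; v) : V_j → ℝ be convex and Gâteaux differentiable with Gâteaux derivative F_j'(·; v) (a map from V_j to continuous linear functionals on V_j), satisfying the consistency conditions F_j(0; v) = F(v) and ⟨F_j'(0; v), x⟩ = ⟨F'(v), x⟩ for all x ∈ V_j. Define d_j(w_j; v) := F_j(w_j; v) − F(v) − ⟨F'(v), w_j⟩ and ⟨d_j'(w_j; v), x⟩ := ⟨F_j'(w_j; v), x⟩ − ⟨F'(v), x⟩ for w_j, x ∈ V_j. Suppose there exist constants ρ ≥ 1 and ω ∈ (0, ρ] such that d_F(w_j; v) ≤ ω·d_j(w_j; v) for all w_j ∈ V_j, and ⟨d_j'(w_j; v), w_j⟩ ≥ ρ·d_j(w_j; v) for all w_j ∈ V_j. If ŵ_j ∈ V_j minimizes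 F_j(·; v) over V_j, then F(v) − F(v + ŵ_j) ≥ (1 − ω/ρ)·⟨d_j'(ŵ_j; v), ŵ_j⟩ ≥ 0. -/
/-- sufficient decrease produced by an inexact local problem
(Lemma A.2). -/
theorem stmt_16 {V : Type*} [NormedAddCommGroup V] [NormedSpace ℝ V] [CompleteSpace V]
    (hrefl : Function.Surjective (NormedSpace.inclusionInDoubleDual ℝ V))
    (Vj : Submodule ℝ V) (hVjc : IsClosed (Vj : Set V))
    (F : V → ℝ) (hconv : ConvexOn ℝ Set.univ F)
    (F' : V → V →L[ℝ] ℝ) (hF' : ∀ v : V, HasGateauxDerivAt F (F' v) v)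
    (v : V)
    (Fj : Vj → ℝ) (hFjconv : ConvexOn ℝ Set.univ Fj)
    (Fj' : Vj → (Vj →L[ℝ] ℝ)) (hFj' : ∀ x : Vj, HasGateauxDerivAt Fj (Fj' x) x)
    (hcons0 : Fj 0 = F v)
    (hcons1 : ∀ x : Vj, Fj' 0 x = F' v (x : V))
    (ρ ω : ℝ) (hρ : 1 ≤ ρ) (hω0 : 0 < ω) (hωρ : ω ≤ ρ)
    (hstab : ∀ wj : Vj,
      F (v + (wj : V)) - F v - F' v (wj : V) ≤ ω * (Fj wj - F v - F' v (wj : V)))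
    (hrho : ∀ wj : Vj,
      ρ * (Fj wj - F v - F' v (wj : V)) ≤ Fj' wj wj - F' v (wj : V))
    (wh : Vj) (hwh : ∀ x : Vj, Fj wh ≤ Fj x) :
    (1 - ω / ρ) * (Fj' wh wh - F' v (wh : V)) ≤ F v - F (v + (wh : V))
    ∧ 0 ≤ (1 - ω / ρ) * (Fj' wh wh - F' v (wh : V)) := by
  have h0 : Fj' wh wh = 0 := by
    have hd : HasDerivAt (fun t : ℝ => Fj (wh + t • wh)) (Fj' wh wh) 0 := by
      rw [hasDerivAt_iff_tendsto_slope_zero]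
      refine (hFj' wh wh).congr fun t => ?_
      simp [div_eq_inv_mul]
    have hm : IsLocalMin (fun t : ℝ => Fj (wh + t • wh)) 0 := by
      refine Filter.Eventually.of_forall fun t => ?_
      simpa using hwh (wh + t • wh)
    exact hm.hasDerivAt_eq_zero hd
  have hneg : F' v (wh : V) ≤ 0 := by
    rw [← hcons1]
    have ht := (hFj' 0 wh).mono_left
      (nhdsWithin_mono (0 : ℝ) (fun t (ht : t ∈ Set.Ioi (0 : ℝ)) => ne_of_gt ht))
    refine le_of_tendsto ht ?_
    filter_upwards [Ioo_mem_nhdsGT (zero_lt_one (α := ℝ))] with t ht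
    obtain ⟨h1, h2⟩ := ht
    refine div_nonpos_of_nonpos_of_nonneg ?_ h1.le
    have hc := hFjconv.2 (Set.mem_univ (0 : Vj)) (Set.mem_univ wh)
      (sub_nonneg.2 h2.le) h1.le (by ring)
    simp only [smul_zero, zero_add, smul_eq_mul] at hc ⊢
    nlinarith [hwh 0]
  have hρ0 : 0 < ρ := by linarith
  have hr : ω / ρ ≤ 1 := (div_le_one hρ0).2 hωρ
  have h1 := hstab wh
  have h2 := mul_le_mul_of_nonneg_left (hrho wh) (div_pos hω0 hρ0).le
  rw [← mul_assoc, div_mul_cancel₀ _ hρ0.ne'] at h2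
  rw [h0] at h2 ⊢
  refine ⟨by linarith, mul_nonneg (by linarith) (by linarith)⟩
end

section
/- Let V be a real reflexive Banach space, V₁, …, V_N closed subspaces of V, F : V → ℝ convex and Gâteaux differentiable with Gâteaux derivative F', and 𝒩 a closed subspace of V with F(v + φ) = F(v) for all v ∈ V, φ ∈ 𝒩. For each j and each v ∈ V let F_j(·; v) : V_j → ℝ be convex and Gâteaux differentiable with derivative F_j'(·; v), satisfying F_j(0; v) = F(v) and ⟨F_j'(0; v), x⟩ = ⟨F'(v), x⟩ for all x ∈ V_j; define d_j(w_j; v) := F_j(w_j; v) − F(v) − ⟨F'(v), w_j⟩ and ⟨d_j'(w_j; v), x⟩ := ⟨F_j'(w_j; v), x⟩ − ⟨F'(v), x⟩. Suppose there exist ρ ≥ 1 and ω > 0 with either ω ∈ (0, 1] or 1 < ω < ρ, such that for all j, v, and w_j ∈ V_j: d_F(w_j; v) ≤ ω·d_j(w_j; v) and ⟨d_j'(w_j; v), w_j⟩ ≥ ρ·d_j(w_j; v). Let τ > 0 satisfy the strengthened convexity condition, and let (u^n) be generated by the PSC iteration with these (inexact) local problems from u⁰ ∈ V: w_j^{n+1}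 minimizes F_j(·; u^n) over V_j and u^{n+1} = u^n + τ·Σ_{j=1}^N w_j^{n+1}. Set θ = 1 if ω ∈ (0, 1] and θ = (ρ − ω)/(ρ − 1) if ω ∈ (1, ρ). Then for every n ≥ 0, every w ∈ V, every φ ∈ 𝒩, and every choice of w_j ∈ V_j with Σ_{j=1}^N w_j = w + φ: F(u^{n+1}) ≤ F(u^n) + τθ·(⟨F'(u^n), w⟩ + Σ_{j=1}^N d_j(w_j; u^n)). -/
theorem gateaux_right {V : Type*} [NormedAddCommGroup V] [NormedSpace ℝ V]
    {F : V → ℝ} {f : V →L[ℝ] ℝ} {v : V} (h : HasGateauxDerivAt F f v) (w : V) :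
    Filter.Tendsto (fun t : ℝ => (F (v + t • w) - F v) / t)
    (nhdsWithin (0 : ℝ) (Set.Ioi 0)) (nhds (f w)) :=
  (h w).mono_left (nhdsWithin_mono _ (fun _ ht => ne_of_gt ht))

theorem gateaux_min_nonneg {V : Type*} [NormedAddCommGroup V] [NormedSpace ℝ V]
    {F : V → ℝ} {f : V →L[ℝ] ℝ} {v : V} (h : HasGateauxDerivAt F f v)
    (hm : ∀ x, F v ≤ F x) (w : V) : 0 ≤ f w := by
  refine ge_of_tendsto (gateaux_right h w) ?_
  filter_upwards [self_mem_nhdsWithin] with t ht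
  exact div_nonneg (sub_nonneg.2 (hm _)) (le_of_lt ht)

theorem gateaux_min {V : Type*} [NormedAddCommGroup V] [NormedSpace ℝ V]
    {F : V → ℝ} {f : V →L[ℝ] ℝ} {v : V} (h : HasGateauxDerivAt F f v)
    (hm : ∀ x, F v ≤ F x) (w : V) : f w = 0 := by
  have h1 := gateaux_min_nonneg h hm w
  have h2 := gateaux_min_nonneg h hm (-w)
  rw [map_neg] at h2
  linarith

theorem gateaux_convex {V : Type*} [NormedAddCommGroup V] [NormedSpace ℝ V]
    {F : V → ℝ} {f : V →L[ℝ] ℝ} {v : V} (h : HasGateauxDerivAt F f v)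
    (hc : ConvexOn ℝ Set.univ F) (w : V) : f w ≤ F (v + w) - F v := by
  refine le_of_tendsto (gateaux_right h w) ?_
  filter_upwards [Ioo_mem_nhdsGT (zero_lt_one : (0 : ℝ) < 1)] with t ht
  rw [div_le_iff₀ ht.1]
  have h1 := hc.2 (Set.mem_univ v) (Set.mem_univ (v + w)) (by linarith [ht.2] : 0 ≤ 1 - t)
    ht.1.le (by ring)
  have e : (1 - t) • v + t • (v + w) = v + t • w := by module
  rw [e] at h1
  simp only [smul_eq_mul] at h1
  linarith

/-- descent property of the PSC method with inexact local problems
(Lemma A.4). -/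
theorem stmt_17 {V : Type*} [NormedAddCommGroup V] [NormedSpace ℝ V] [CompleteSpace V]
    (hrefl : Function.Surjective (NormedSpace.inclusionInDoubleDual ℝ V))
    (N : ℕ) (Vj : Fin N → Submodule ℝ V) (hVjc : ∀ j, IsClosed ((Vj j : Set V)))
    (F : V → ℝ) (hconv : ConvexOn ℝ Set.univ F)
    (F' : V → V →L[ℝ] ℝ) (hF' : ∀ v : V, HasGateauxDerivAt F (F' v) v)
    (𝒩 : Submodule ℝ V) (h𝒩c : IsClosed ((𝒩 : Set V)))
    (hinv : ∀ v : V, ∀ φ ∈ 𝒩, F (v + φ) = F v)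
    (Fj : (j : Fin N) → V → (Vj j) → ℝ)
    (Fj' : (j : Fin N) → V → (Vj j) → ((Vj j) →L[ℝ] ℝ))
    (hFjconv : ∀ (j : Fin N) (v : V), ConvexOn ℝ Set.univ (Fj j v))
    (hFj' : ∀ (j : Fin N) (v : V) (x : Vj j), HasGateauxDerivAt (Fj j v) (Fj' j v x) x)
    (hcons0 : ∀ (j : Fin N) (v : V), Fj j v 0 = F v)
    (hcons1 : ∀ (j : Fin N) (v : V) (x : Vj j), Fj' j v 0 x = F' v (x : V))
    (ρ ω : ℝ) (hρ : 1 ≤ ρ) (hω0 : 0 < ω) (hωcase : ω ≤ 1 ∨ (1 < ω ∧ ω < ρ))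
    (hstab : ∀ (j : Fin N) (v : V) (wj : Vj j),
      F (v + (wj : V)) - F v - F' v (wj : V) ≤
        ω * (Fj j v wj - F v - F' v (wj : V)))
    (hrho : ∀ (j : Fin N) (v : V) (wj : Vj j),
      ρ * (Fj j v wj - F v - F' v (wj : V)) ≤ Fj' j v wj wj - F' v (wj : V))
    (τ : ℝ) (hτ : 0 < τ)
    (hsc : ∀ (v : V) (z : Fin N → V), (∀ j, z j ∈ Vj j) →
      (1 - τ * (N : ℝ)) * F v + τ * ∑ j, F (v + z j) ≥ F (v + τ • ∑ j, z j))
    (u : ℕ → V) (wh : (n : ℕ) → (j : Fin N) → Vj j)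
    (hwhmin : ∀ (n : ℕ) (j : Fin N), ∀ x : Vj j, Fj j (u n) (wh n j) ≤ Fj j (u n) x)
    (hupd : ∀ n : ℕ, u (n + 1) = u n + τ • ∑ j, ((wh n j : V)))
    (θ : ℝ) (hθ1 : ω ≤ 1 → θ = 1) (hθ2 : 1 < ω → θ = (ρ - ω) / (ρ - 1)) :
    ∀ n : ℕ, ∀ (z φ : V), φ ∈ 𝒩 → ∀ wj : (j : Fin N) → Vj j,
      (∑ j, ((wj j : V))) = z + φ →
      F (u (n + 1)) ≤ F (u n) + τ * θ *
        (F' (u n) z + ∑ j, (Fj j (u n) (wj j) - F (u n) - F' (u n) (wj j : V))) := by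
  intro n z φ hφ wj hsum
  have hφ0 : F' (u n) φ = 0 := by
    have h1 := hF' (u n) φ
    have h2 : (fun t : ℝ => (F (u n + t • φ) - F (u n)) / t) = fun _ => 0 := by
      funext t
      rw [hinv _ _ (𝒩.smul_mem t hφ)]
      simp
    rw [h2] at h1
    exact tendsto_nhds_unique h1 tendsto_const_nhds
  have key : ∀ j, F (u n + (wh n j : V)) - F (u n) ≤ θ * (Fj j (u n) (wj j) - F (u n)) := by
    intro j
    have hs := hstab j (u n) (wh n j)
    have hr := hrho j (u n) (wh n j)
    have hm := hwhmin n j (wj j)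
    rw [gateaux_min (hFj' j (u n) (wh n j)) (hwhmin n j)] at hr
    have hd := gateaux_convex (hFj' j (u n) 0) (hFjconv j (u n)) (wh n j)
    rw [hcons1, hcons0, zero_add] at hd
    rcases hωcase with h | ⟨h, h'⟩
    · rw [hθ1 h]
      nlinarith
    · have hp : 0 < ρ - 1 := by linarith
      rw [hθ2 h, div_mul_eq_mul_div, le_div_iff₀ hp]
      have h3 := mul_le_mul_of_nonneg_left hs hp.le
      have h4 := mul_le_mul_of_nonneg_left hm (sub_nonneg.2 h'.le)
      have h5 := mul_le_mul_of_nonneg_left hr (sub_nonneg.2 h.le)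
      linarith
  have hS := Finset.sum_le_sum (fun j (_ : j ∈ Finset.univ) => key j)
  rw [← Finset.mul_sum] at hS
  have e : F' (u n) z + ∑ j, (Fj j (u n) (wj j) - F (u n) - F' (u n) (wj j : V))
      = ∑ j, (Fj j (u n) (wj j) - F (u n)) := by
    rw [Finset.sum_sub_distrib _ (fun j => F' (u n) (wj j : V)), ← map_sum, hsum, map_add, hφ0]
    ring
  have hc := hsc (u n) (fun j => (wh n j : V)) (fun j => (wh n j).2)
  rw [e, hupd]
  have h6 := mul_le_mul_of_nonneg_left hS hτ.le
  rw [Finset.sum_sub_distrib] at h6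
  simp only [Finset.sum_const, Finset.card_univ, Fintype.card_fin, nsmul_eq_mul] at h6
  linarith
end

section
/- Let (a_n)_{n ≥ 0} be a sequence of positive real numbers, and let C > 0 and γ > 1 be constants such that a_n − a_{n+1} ≥ C·a_n^γ for all n ≥ 0. Set β = 1/(γ − 1). Then for all n ≥ 0: a_n ≤ (β/(C·n + β·a_0^{−1/β}))^β. -/
/-- decay of a positive sequence satisfying
`a_n − a_{n+1} ≥ C·a_n^γ` (Lemma B.2). -/
theorem stmt_19 (a : ℕ → ℝ) (ha : ∀ n, 0 < a n)
    (C γ : ℝ) (hC : 0 < C) (hγ : 1 < γ)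
    (hrec : ∀ n : ℕ, C * (a n) ^ γ ≤ a n - a (n + 1))
    (β : ℝ) (hβ : β = 1 / (γ - 1)) :
    ∀ n : ℕ, a n ≤ (β / (C * (n : ℝ) + β * (a 0) ^ (-(1 / β)))) ^ β := by
  obtain ⟨s, hs⟩ : ∃ s, s = γ - 1 := ⟨_, rfl⟩
  have hs0 : 0 < s := by linarith
  have hβs : 1 / β = s := by rw [hβ, hs]; simp
  have hβ0 : 0 < β := by rw [hβ, ← hs]; positivity
  have hbs : β * s = 1 := by rw [← hβs]; field_simp
  rw [hβs]
  have step : ∀ n, (a n) ^ (-s) + s * C ≤ (a (n + 1)) ^ (-s) := by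
    intro n
    have h0 := ha n
    have h1 := hrec n
    have hg : (a n) ^ γ = a n * (a n) ^ s := by
      rw [show γ = 1 + s by linarith, Real.rpow_add h0, Real.rpow_one]
    rw [hg] at h1
    have h2 : a (n + 1) ≤ a n * Real.exp (-(C * (a n) ^ s)) := by
      have := mul_le_mul_of_nonneg_left (Real.add_one_le_exp (-(C * (a n) ^ s))) h0.le
      nlinarith
    have h3 := Real.rpow_le_rpow_of_nonpos (ha (n + 1)) h2 (show -s ≤ 0 by linarith)
    rw [Real.mul_rpow h0.le (Real.exp_pos _).le, ← Real.exp_mul] at h3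
    have h4 := mul_le_mul_of_nonneg_left
      (Real.add_one_le_exp (-(C * (a n) ^ s) * -s)) (Real.rpow_pos_of_pos h0 (-s)).le
    have h5 : (a n) ^ (-s) * (a n) ^ s = 1 := by
      rw [← Real.rpow_add h0]; simp
    have h6 : (a n) ^ (-s) * (-(C * (a n) ^ s) * -s + 1) = (a n) ^ (-s) + s * C := by
      linear_combination (s * C) * h5
    linarith
  have main : ∀ n : ℕ, C * (n : ℝ) + β * (a 0) ^ (-s) ≤ β * (a n) ^ (-s) := by
    intro n
    induction n with
    | zero => simp
    | succ k ih =>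
      have h := mul_le_mul_of_nonneg_left (step k) hβ0.le
      have h' : β * ((a k) ^ (-s) + s * C) = β * (a k) ^ (-s) + C := by
        linear_combination C * hbs
      push_cast
      linarith
  intro n
  have hD : 0 < C * (n : ℝ) + β * (a 0) ^ (-s) := by
    have := Real.rpow_pos_of_pos (ha 0) (-s)
    positivity
  have h5 : (a n) ^ (-s) * (a n) ^ s = 1 := by
    rw [← Real.rpow_add (ha n)]; simp
  have hp := Real.rpow_pos_of_pos (ha n) s
  have key : (a n) ^ s ≤ β / (C * (n : ℝ) + β * (a 0) ^ (-s)) := by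
    rw [le_div_iff₀ hD]
    have := mul_le_mul_of_nonneg_left (main n) hp.le
    have h7 : (a n) ^ s * (β * (a n) ^ (-s)) = β := by linear_combination β * h5
    linarith
  have := Real.rpow_le_rpow hp.le key hβ0.le
  rwa [← Real.rpow_mul (ha n).le, mul_comm s β, hbs, Real.rpow_one] at this
end
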